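/- Let μ be a composition of n, let ν = μ* be the composition with the same nonzero parts taken in the opposite order, and let d be the longest element of D_{μ,ν}. Then for every left H_ν-module M there is a natural isomorphism of H_n-modules Hom_{H_μ}(H_n, ^dM) ≅ H_n ⊗_{H_ν} M. -/

import Mathlib

set_option maxHeartbeats 1000000

namespace HC

/-- Generators of the affine Hecke–Clifford superalgebra `H_n`. -/
inductive Gen (n : ℕ) : Type
  | X : Fin n → Gen n
  | Xinv : Fin n → Gen n
  | C : Fin n → Gen n
  | T : Fin (n - 1) → Gen n

/-- The node `i` of `Fin n`, for `i : Fin (n-1)` (1-based: the node `i`). -/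
def lo {n : ℕ} (i : Fin (n - 1)) : Fin n :=
  ⟨i.val, by have := i.isLt; omega⟩

/-- The node `i+1` of `Fin n`, for `i : Fin (n-1)`. -/
def hi {n : ℕ} (i : Fin (n - 1)) : Fin n :=
  ⟨i.val + 1, by have := i.isLt; omega⟩

variable (F : Type) [Field F]

/-- The free algebra on the generators. -/
abbrev FA (n : ℕ) : Type := FreeAlgebra F (Gen n)

noncomputable def fx {n : ℕ} (i : Fin n) : FA F n := FreeAlgebra.ι F (Gen.X i)
noncomputable def fxinv {n : ℕ} (i : Fin n) : FA F n := FreeAlgebra.ι F (Gen.Xinv i)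
noncomputable def fc {n : ℕ} (i : Fin n) : FA F n := FreeAlgebra.ι F (Gen.C i)
noncomputable def ft {n : ℕ} (i : Fin (n - 1)) : FA F n := FreeAlgebra.ι F (Gen.T i)

/-- The defining relations of the affine Hecke–Clifford superalgebra, with parameter
`q` and `ξ = q - q⁻¹`. -/
inductive Rel (q : F) (n : ℕ) : FA F n → FA F n → Prop
  | XXinv (i : Fin n) : Rel q n (fx F i * fxinv F i) 1
  | XinvX (i : Fin n) : Rel q n (fxinv F i * fx F i) 1
  | XX (i j : Fin n) : Rel q n (fx F i * fx F j) (fx F j * fx F i)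
  | XiXi (i j : Fin n) : Rel q n (fxinv F i * fxinv F j) (fxinv F j * fxinv F i)
  | XXi (i j : Fin n) (h : i ≠ j) : Rel q n (fx F i * fxinv F j) (fxinv F j * fx F i)
  | CC (i : Fin n) : Rel q n (fc F i * fc F i) 1
  | Canti (i j : Fin n) (h : i ≠ j) : Rel q n (fc F i * fc F j) (-(fc F j * fc F i))
  | CX (i : Fin n) : Rel q n (fc F i * fx F i) (fxinv F i * fc F i)
  | CXi (i : Fin n) : Rel q n (fc F i * fxinv F i) (fx F i * fc F i)
  | CXo (i j : Fin n) (h : i ≠ j) : Rel q n (fc F i * fx F j) (fx F j * fc F i)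
  | CXio (i j : Fin n) (h : i ≠ j) : Rel q n (fc F i * fxinv F j) (fxinv F j * fc F i)
  | Tquad (i : Fin (n - 1)) : Rel q n (ft F i * ft F i) ((q - q⁻¹) • ft F i + 1)
  | Tbraid (i j : Fin (n - 1)) (h : (j : ℕ) = (i : ℕ) + 1) :
      Rel q n (ft F i * ft F j * ft F i) (ft F j * ft F i * ft F j)
  | TTfar (i j : Fin (n - 1)) (h : (i : ℕ) + 1 < (j : ℕ)) :
      Rel q n (ft F i * ft F j) (ft F j * ft F i)
  | TC (i : Fin (n - 1)) : Rel q n (ft F i * fc F (lo i)) (fc F (hi i) * ft F i)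
  | TCo (i : Fin (n - 1)) (j : Fin n) (h1 : j ≠ lo i) (h2 : j ≠ hi i) :
      Rel q n (ft F i * fc F j) (fc F j * ft F i)
  | TXo (i : Fin (n - 1)) (j : Fin n) (h1 : j ≠ lo i) (h2 : j ≠ hi i) :
      Rel q n (ft F i * fx F j) (fx F j * ft F i)
  | TXio (i : Fin (n - 1)) (j : Fin n) (h1 : j ≠ lo i) (h2 : j ≠ hi i) :
      Rel q n (ft F i * fxinv F j) (fxinv F j * ft F i)
  | cross (i : Fin (n - 1)) :
      Rel q n ((ft F i + (q - q⁻¹) • (fc F (lo i) * fc F (hi i))) * fx F (lo i) * ft F i)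
        (fx F (hi i))

/-- The affine Hecke–Clifford superalgebra `H_n` over `F` with parameter `q`. -/
abbrev H (q : F) (n : ℕ) : Type := RingQuot (Rel F q n)

noncomputable def X (q : F) {n : ℕ} (i : Fin n) : H F q n :=
  RingQuot.mkAlgHom F (Rel F q n) (fx F i)

noncomputable def Xinv (q : F) {n : ℕ} (i : Fin n) : H F q n :=
  RingQuot.mkAlgHom F (Rel F q n) (fxinv F i)

noncomputable def C (q : F) {n : ℕ} (i : Fin n) : H F q n :=
  RingQuot.mkAlgHom F (Rel F q n) (fc F i)

noncomputable def T (q : F) {n : ℕ} (i : Fin (n - 1)) : H F q n :=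
  RingQuot.mkAlgHom F (Rel F q n) (ft F i)

/-- `q` is either a primitive root of unity of odd order (including `q = 1`)
or not a root of unity at all (and `q ≠ 0`). -/
def GoodParam (q : F) : Prop :=
  q ≠ 0 ∧ ((∃ m : ℕ, Odd m ∧ IsPrimitiveRoot q m) ∨ ∀ m : ℕ, 0 < m → q ^ m ≠ 1)

/-- `X_i^a` for an integer exponent `a ∈ ℤ`. -/
noncomputable def XZ (q : F) {n : ℕ} (i : Fin n) (a : ℤ) : H F q n :=
  if 0 ≤ a then X F q i ^ a.toNat else Xinv F q i ^ (-a).toNat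

/-- The monomial `X^α = X_1^{α_1} ⋯ X_n^{α_n}` for `α ∈ ℤ^n`. -/
noncomputable def Xmon (q : F) {n : ℕ} (α : Fin n → ℤ) : H F q n :=
  ((List.finRange n).map fun i => XZ F q i (α i)).prod

/-- The monomial `C^β = C_1^{β_1} ⋯ C_n^{β_n}` for `β ∈ {0,1}^n`. -/
noncomputable def Cmon (q : F) {n : ℕ} (β : Fin n → Bool) : H F q n :=
  ((List.finRange n).map fun i => if β i then C F q i else 1).prod

/-- The basic transposition `s_i = (i, i+1)` of `S_n`. -/
def s {n : ℕ} (i : Fin (n - 1)) : Equiv.Perm (Fin n) := Equiv.swap (lo i) (hi i)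

/-- The Coxeter length (number of inversions) of a permutation of `Fin n`. -/
def len {n : ℕ} (w : Equiv.Perm (Fin n)) : ℕ :=
  ((Finset.univ : Finset (Fin n × Fin n)).filter fun p => p.1 < p.2 ∧ w p.2 < w p.1).card

/-- `Tw` is the family of standard basis elements `T_w`, `w ∈ S_n`: it satisfies
`T_1 = 1`, `T_{s_i} = T_i`, and `T_{s_i w} = T_i T_w` whenever `ℓ(s_i w) = ℓ(w) + 1`.
These conditions determine the family uniquely. -/
def IsTFam (q : F) {n : ℕ} (Tw : Equiv.Perm (Fin n) → H F q n) : Prop :=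
  Tw 1 = 1 ∧ (∀ i : Fin (n - 1), Tw (s i) = T F q i) ∧
    ∀ (i : Fin (n - 1)) (w : Equiv.Perm (Fin n)),
      len (s i * w) = len w + 1 → Tw (s i * w) = T F q i * Tw w

/-- `h` is the quantum characteristic of `q`:  the smallest positive integer with
`q^{1-h} + q^{3-h} + ⋯ + q^{h-1} = 0`. -/
def qcharEq (q : F) (h : ℕ) : Prop :=
  0 < h ∧ (∑ k ∈ Finset.range h, q ^ (1 - (h : ℤ) + 2 * (k : ℤ))) = 0 ∧
    ∀ h' : ℕ, 0 < h' → h' < h →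
      (∑ k ∈ Finset.range h', q ^ (1 - (h' : ℤ) + 2 * (k : ℤ))) ≠ 0

/-- `i ∈ I = {0, 1, …, ℓ}` where `ℓ = (h-1)/2` (no condition if the quantum
characteristic is infinite). -/
def memI (q : F) (i : ℕ) : Prop := ∀ h : ℕ, qcharEq F q h → 2 * i + 1 ≤ h

/-- `q(i) = 2(q^{2i+1} + q^{-2i-1})/(q + q⁻¹)`. -/
noncomputable def qres (q : F) (i : ℕ) : F :=
  2 * (q ^ (2 * i + 1) + q⁻¹ ^ (2 * i + 1)) / (q + q⁻¹)

/-- Index of the block containing position `k` (0-based), for a composition given as a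
list of parts. -/
def blk : List ℕ → ℕ → ℕ
  | [], _ => 0
  | a :: rest, k => if k < a then 0 else blk rest (k - a) + 1

/-- Membership in the Young subgroup `S_μ ⊆ S_n`. -/
def InYoung {n : ℕ} (μ : List ℕ) (w : Equiv.Perm (Fin n)) : Prop :=
  ∀ k : Fin n, blk μ (w k).val = blk μ k.val

/-- `μ` is a composition of `n`. -/
def IsComposition (μ : List ℕ) (n : ℕ) : Prop := (∀ a ∈ μ, 0 < a) ∧ μ.sum = n

/-- The parabolic subalgebra generated by all `X_i^{±1}`, `C_i`, and the `T_j` with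
`j` in a set `J` of admissible indices. -/
def parabolicJ (q : F) {n : ℕ} (J : Set (Fin (n - 1))) : Subalgebra F (H F q n) :=
  Algebra.adjoin F
    ((Set.range fun i : Fin n => X F q i) ∪ (Set.range fun i : Fin n => Xinv F q i) ∪
      (Set.range fun i : Fin n => C F q i) ∪ {h | ∃ j ∈ J, h = T F q j})

/-- The parabolic subalgebra `H_μ` for a composition `μ`. -/
def parabolicC (q : F) {n : ℕ} (μ : List ℕ) : Subalgebra F (H F q n) :=
  parabolicJ F q {j | InYoung μ (s j)}

/-- The classical parabolic subalgebra `H^cl_μ`, generated by the `T_j` with `s_j ∈ S_μ`. -/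
def clparC (q : F) {n : ℕ} (μ : List ℕ) : Subalgebra F (H F q n) :=
  Algebra.adjoin F {h | ∃ j : Fin (n - 1), InYoung μ (s j) ∧ h = T F q j}

/-- The finite Hecke–Clifford subalgebra `H^fn_n`, generated by all `C_i` and `T_j`. -/
def Hfin (q : F) (n : ℕ) : Subalgebra F (H F q n) :=
  Algebra.adjoin F
    ((Set.range fun i : Fin n => C F q i) ∪ {h | ∃ j : Fin (n - 1), h = T F q j})

/-- `x` is a minimal length `(S_μ, S_ν)`-double coset representative. -/
def IsMinDC {n : ℕ} (μ ν : List ℕ) (x : Equiv.Perm (Fin n)) : Prop :=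
  ∀ u v : Equiv.Perm (Fin n), InYoung μ u → InYoung ν v → len x ≤ len (u * x * v)

/-- `w ∈ S_μ x S_ν`. -/
def InDC {n : ℕ} (μ ν : List ℕ) (x w : Equiv.Perm (Fin n)) : Prop :=
  ∃ u v : Equiv.Perm (Fin n), InYoung μ u ∧ InYoung ν v ∧ w = u * x * v

/-- A covering step in the Bruhat order: multiplication by a reflection increasing length. -/
def BruhatStep {n : ℕ} (v w : Equiv.Perm (Fin n)) : Prop :=
  ∃ a b : Fin n, a ≠ b ∧ w = Equiv.swap a b * v ∧ len v < len w

/-- The Bruhat order on `S_n`. -/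
def BruhatLE {n : ℕ} : Equiv.Perm (Fin n) → Equiv.Perm (Fin n) → Prop :=
  Relation.ReflTransGen BruhatStep

/-- The space of `A`-equivariant linear maps between two representations of the
`F`-algebra `A`. -/
def eqvHoms {A : Type} [Ring A] [Algebra F A] {M N : Type}
    [AddCommGroup M] [Module F M] [AddCommGroup N] [Module F N]
    (ρM : A →ₐ[F] Module.End F M) (ρN : A →ₐ[F] Module.End F N) :
    Submodule F (M →ₗ[F] N) where
  carrier := {f | ∀ (x : A) (m : M), f (ρM x m) = ρN x (f m)}
  add_mem' := by
    intro f g hf hg x m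
    simp only [LinearMap.add_apply, hf x m, hg x m, map_add]
  zero_mem' := by
    intro x m
    simp only [LinearMap.zero_apply, map_zero]
  smul_mem' := by
    intro c f hf x m
    simp only [LinearMap.smul_apply, hf x m, map_smul]

/-- `(E, ρE, ι)` is the module induced along the algebra morphism `φ : B →ₐ A` from
the `B`-representation `(M, ρ)`, i.e. `E = A ⊗_B M`, characterized by its universal
property. -/
def IsInducedAlong {A B : Type} [Ring A] [Ring B] [Algebra F A] [Algebra F B]
    (φ : B →ₐ[F] A) {M : Type} [AddCommGroup M] [Module F M]
    (ρ : B →ₐ[F] Module.End F M) {E : Type} [AddCommGroup E] [Module F E]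
    (ρE : A →ₐ[F] Module.End F E) (ι : M →ₗ[F] E) : Prop :=
  (∀ (b : B) (m : M), ι (ρ b m) = ρE (φ b) (ι m)) ∧
    ∀ (P : Type) [AddCommGroup P] [Module F P],
      ∀ (ρP : A →ₐ[F] Module.End F P) (f : M →ₗ[F] P),
        (∀ (b : B) (m : M), f (ρ b m) = ρP (φ b) (f m)) →
        ∃! g : E →ₗ[F] P,
          (∀ (x : A) (e : E), g (ρE x e) = ρP x (g e)) ∧ ∀ m : M, g (ι m) = f m

/-- `δ` is the grading automorphism of the superalgebra `H_n`
(identity on even generators, `-1` on the odd generators `C_i`). -/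
def IsGradingAut (q : F) {n : ℕ} (δ : H F q n →ₐ[F] H F q n) : Prop :=
  (∀ i : Fin n, δ (X F q i) = X F q i) ∧ (∀ i : Fin n, δ (Xinv F q i) = Xinv F q i) ∧
    (∀ i : Fin n, δ (C F q i) = -C F q i) ∧ ∀ i : Fin (n - 1), δ (T F q i) = T F q i

/-- `τ` is the antiautomorphism of `H_n` with `τ(T_i) = T_i + ξ C_i C_{i+1}`,
`τ(C_j) = C_j`, `τ(X_j) = X_j`. -/
def IsTauAntiAut (q : F) {n : ℕ} (τ : H F q n →ₗ[F] H F q n) : Prop :=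
  Function.Bijective τ ∧ (∀ a b : H F q n, τ (a * b) = τ b * τ a) ∧ τ 1 = 1 ∧
    (∀ i : Fin (n - 1),
      τ (T F q i) = T F q i + (q - q⁻¹) • (C F q (lo i) * C F q (hi i))) ∧
    (∀ j : Fin n, τ (C F q j) = C F q j) ∧ (∀ j : Fin n, τ (X F q j) = X F q j) ∧
    ∀ j : Fin n, τ (Xinv F q j) = Xinv F q j

/-- `ρ'` is the representation of the subalgebra `B` obtained from the
`H_ν`-representation `ρν` by twisting with the isomorphism `φ_{x⁻¹}`
(determined by `X_i ↦ X_{x⁻¹ i}`, `C_i ↦ C_{x⁻¹ i}`, `T_w ↦ T_{x⁻¹ w x}`). -/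
def IsTwistedRep (q : F) {n : ℕ} (ν : List ℕ) (x : Equiv.Perm (Fin n))
    (B : Subalgebra F (H F q n)) {M : Type} [AddCommGroup M] [Module F M]
    (ρν : ↥(parabolicC F q (n := n) ν) →ₐ[F] Module.End F M)
    (ρ' : ↥B →ₐ[F] Module.End F M) : Prop :=
  (∀ (i : Fin n) (a : ↥B) (b : ↥(parabolicC F q (n := n) ν)),
      (a : H F q n) = X F q i → (b : H F q n) = X F q (x⁻¹ i) → ρ' a = ρν b) ∧
  (∀ (i : Fin n) (a : ↥B) (b : ↥(parabolicC F q (n := n) ν)),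
      (a : H F q n) = Xinv F q i → (b : H F q n) = Xinv F q (x⁻¹ i) → ρ' a = ρν b) ∧
  (∀ (i : Fin n) (a : ↥B) (b : ↥(parabolicC F q (n := n) ν)),
      (a : H F q n) = C F q i → (b : H F q n) = C F q (x⁻¹ i) → ρ' a = ρν b) ∧
  ∀ (j j' : Fin (n - 1)) (a : ↥B) (b : ↥(parabolicC F q (n := n) ν)),
      lo j' = x⁻¹ (lo j) → (a : H F q n) = T F q j → (b : H F q n) = T F q j' → ρ' a = ρν b

/-- The element `f = a_d X_1^d + ⋯ + a_1 X_1 + a_0` of `H_n`. -/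
noncomputable def felem (q : F) (n d : ℕ) (aa : ℕ → F) : H F q n :=
  if h : 0 < n then ∑ i ∈ Finset.range (d + 1), aa i • X F q (⟨0, h⟩ : Fin n) ^ i else 0

/-- The conditions on the coefficients of `f`: degree `d ≥ 1`, monic, and
`a_i = a_0 a_{d-i}`. -/
def GoodPoly (d : ℕ) (aa : ℕ → F) : Prop :=
  1 ≤ d ∧ aa d = 1 ∧ (∀ i ≤ d, aa i = aa 0 * aa (d - i)) ∧ ∀ i : ℕ, d < i → aa i = 0

/-- The relation generating the two-sided ideal `I_f` of `H_n`. -/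
inductive CycRel (q : F) (n d : ℕ) (aa : ℕ → F) : H F q n → H F q n → Prop
  | rel : CycRel q n d aa (felem F q n d aa) 0

/-- The cyclotomic Hecke–Clifford superalgebra `H_n^f = H_n / I_f`. -/
abbrev Hf (q : F) (n d : ℕ) (aa : ℕ → F) : Type := RingQuot (CycRel F q n d aa)

/-- The canonical quotient map `H_n → H_n^f`. -/
noncomputable def cyc (q : F) (n d : ℕ) (aa : ℕ → F) : H F q n →ₐ[F] Hf F q n d aa :=
  RingQuot.mkAlgHom F (CycRel F q n d aa)

noncomputable def Xf (q : F) (n d : ℕ) (aa : ℕ → F) (i : Fin n) : Hf F q n d aa :=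
  cyc F q n d aa (X F q i)
noncomputable def Xinvf (q : F) (n d : ℕ) (aa : ℕ → F) (i : Fin n) : Hf F q n d aa :=
  cyc F q n d aa (Xinv F q i)
noncomputable def Cf (q : F) (n d : ℕ) (aa : ℕ → F) (i : Fin n) : Hf F q n d aa :=
  cyc F q n d aa (C F q i)
noncomputable def Tf (q : F) (n d : ℕ) (aa : ℕ → F) (i : Fin (n - 1)) : Hf F q n d aa :=
  cyc F q n d aa (T F q i)

/-- `e` is the canonical embedding `H_k^f → H_N^f` (shifting all indices by `sh`;
for `sh = 0` this is the standard identification of `H_k^f` with a subalgebra of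
`H_N^f`). -/
def IsCycEmb (q : F) (k N d : ℕ) (aa : ℕ → F) (sh : ℕ)
    (e : Hf F q k d aa →ₐ[F] Hf F q N d aa) : Prop :=
  (∀ (i : Fin k) (i' : Fin N), (i' : ℕ) = sh + (i : ℕ) →
      e (Xf F q k d aa i) = Xf F q N d aa i') ∧
  (∀ (i : Fin k) (i' : Fin N), (i' : ℕ) = sh + (i : ℕ) →
      e (Xinvf F q k d aa i) = Xinvf F q N d aa i') ∧
  (∀ (i : Fin k) (i' : Fin N), (i' : ℕ) = sh + (i : ℕ) →
      e (Cf F q k d aa i) = Cf F q N d aa i') ∧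
  ∀ (j : Fin (k - 1)) (j' : Fin (N - 1)), (j' : ℕ) = sh + (j : ℕ) →
      e (Tf F q k d aa j) = Tf F q N d aa j'

/-- `δ` is the grading automorphism of the superalgebra `H_n^f`. -/
def IsCycGrading (q : F) (n d : ℕ) (aa : ℕ → F)
    (δ : Hf F q n d aa →ₐ[F] Hf F q n d aa) : Prop :=
  (∀ i : Fin n, δ (Xf F q n d aa i) = Xf F q n d aa i) ∧
  (∀ i : Fin n, δ (Xinvf F q n d aa i) = Xinvf F q n d aa i) ∧
  (∀ i : Fin n, δ (Cf F q n d aa i) = -Cf F q n d aa i) ∧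
  ∀ j : Fin (n - 1), δ (Tf F q n d aa j) = Tf F q n d aa j

/-- The elements `f_1 = f`, `f_{i+1} = (T_i + ξ C_i C_{i+1}) f_i T_i` of `H_n`
(0-based indexing: `fseq k = f_{k+1}`). -/
noncomputable def fseq (q : F) (n d : ℕ) (aa : ℕ → F) : ℕ → H F q n
  | 0 => felem F q n d aa
  | k + 1 =>
    if h : k < n - 1 then
      (T F q (⟨k, h⟩ : Fin (n - 1)) +
          (q - q⁻¹) • (C F q (lo (⟨k, h⟩ : Fin (n - 1))) *
            C F q (hi (⟨k, h⟩ : Fin (n - 1))))) *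
        fseq q n d aa k * T F q (⟨k, h⟩ : Fin (n - 1))
    else 0

/-- `f_Z = f_{z_1} ⋯ f_{z_u}` for `Z = {z_1 < ⋯ < z_u} ⊆ {1,…,n}` (0-based). -/
noncomputable def fZ (q : F) (n d : ℕ) (aa : ℕ → F) (Z : Finset (Fin n)) : H F q n :=
  ((Z.sort (· ≤ ·)).map fun z => fseq F q n d aa (z : ℕ)).prod

/-- The coinduced module `Hom_{H_B}(H_n, M)` for a subalgebra `B ⊆ H_n` and a
`B`-representation `(M, ρ)`: linear maps `ψ : H_n → M` with `ψ(b x) = b · ψ(x)` for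
`b ∈ B`; `H_n` acts by right translation. -/
def coindPar (F : Type) [Field F] (q : F) {n : ℕ} (B : Subalgebra F (H F q n))
    {M : Type} [AddCommGroup M] [Module F M] (ρ : ↥B →ₐ[F] Module.End F M) :
    Submodule F (H F q n →ₗ[F] M) where
  carrier := {ψ | ∀ (b : ↥B) (x : H F q n), ψ ((b : H F q n) * x) = ρ b (ψ x)}
  add_mem' := by
    intro f g hf hg b x
    simp only [LinearMap.add_apply, hf b x, hg b x, map_add]
  zero_mem' := by intro b x; simp only [LinearMap.zero_apply, map_zero]
  smul_mem' := by
    intro cc f hf b x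
    simp only [LinearMap.smul_apply, hf b x, map_smul]

end HC

/-! With `y_k = C_k X_k` in place of `X_k`, the generators `C_k` and `y_k` play symmetric roles: all
square to `1`, those at different indices anticommute, and `T_i` passes both families by the same
rule, a permutation plus a skew derivation. Hence `H_n` acts on the free module with basis `δ_w`
over the polynomial–Clifford algebra. The relations among the `T_i` hold there because an operator
that commutes with right multiplications and is normalised by the Clifford generators vanishes as
soon as it kills `δ_1`. Acting on `δ_1` shows that the `T_w` form a basis of `H_n`.

The Frobenius projection `H_n → H_μ` takes the part supported on the `T_{ud}` with `u ∈ S_μ` and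
drops `T_d`. It is left `H_μ`-linear, and right `H_ν`-linear through the twist by `d`, so it induces
an `H_n`-map from the induced to the coinduced module. Pairing `T_x` with `T_{y⁻¹d}`, for `x` and
`y` minimal representatives of the cosets `S_μ x` and `S_μ y`, gives a matrix that is unitriangular
with respect to length, so this map is bijective. -/

namespace HC

open Equiv (Perm)

section Combinatorics

variable {n : ℕ}

theorem lo_lt_hi (i : Fin (n - 1)) : lo i < hi i := Nat.lt_succ_self i.val

theorem lo_ne_hi (i : Fin (n - 1)) : lo i ≠ hi i := (lo_lt_hi i).ne

@[simp] theorem s_lo (i : Fin (n - 1)) : s i (lo i) = hi i := Equiv.swap_apply_left _ _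

@[simp] theorem s_hi (i : Fin (n - 1)) : s i (hi i) = lo i := Equiv.swap_apply_right _ _

theorem s_apply_of_ne (i : Fin (n - 1)) {k : Fin n} (hlo : k ≠ lo i) (hhi : k ≠ hi i) :
    s i k = k :=
  Equiv.swap_apply_of_ne_of_ne hlo hhi

@[simp] theorem s_mul_self (i : Fin (n - 1)) : s i * s i = 1 := Equiv.swap_mul_self _ _

@[simp] theorem s_inv (i : Fin (n - 1)) : (s i)⁻¹ = s i := Equiv.swap_inv _ _

@[simp] theorem s_mul_s_mul (i : Fin (n - 1)) (w : Perm (Fin n)) : s i * (s i * w) = w := by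
  rw [← mul_assoc, s_mul_self, one_mul]

@[simp] theorem mul_s_mul_s (i : Fin (n - 1)) (w : Perm (Fin n)) : w * s i * s i = w := by
  rw [mul_assoc, s_mul_self, mul_one]

theorem s_apply_val (i : Fin (n - 1)) (k : Fin n) :
    (s i k).val =
      if k.val = i.val then i.val + 1 else if k.val = i.val + 1 then i.val else k.val := by
  simp only [s, Equiv.swap_apply_def, Fin.ext_iff, lo, hi]
  split_ifs <;> rfl

theorem s_lt_s_iff (i : Fin (n - 1)) {a b : Fin n} (h : ¬(a = lo i ∧ b = hi i))
    (h' : ¬(a = hi i ∧ b = lo i)) : s i a < s i b ↔ a < b := by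
  simp only [Fin.ext_iff, lo, hi] at h h'
  rw [Fin.lt_def, Fin.lt_def, s_apply_val, s_apply_val]
  split_ifs <;> omega

theorem lt_of_forall_lo_lt_hi {α : Type*} [Preorder α] {f : Fin n → α} {a b : Fin n}
    (hab : a < b) (h : ∀ i : Fin (n - 1), a ≤ lo i → hi i ≤ b → f (lo i) < f (hi i)) :
    f a < f b := by
  obtain ⟨b, hb⟩ := b
  induction b, (show a.val + 1 ≤ b from hab) using Nat.le_induction with
  | base => exact h ⟨a, by omega⟩ le_rfl le_rfl
  | succ m ham ih =>
    have hlt : f a < f ⟨m, by omega⟩ :=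
      ih (by omega) ham fun i hai him => h i hai (him.trans (Nat.le_succ m))
    exact hlt.trans (h ⟨m, by omega⟩ (Nat.le_of_lt ham) le_rfl)

theorem perm_eq_one_of_strictMono {w : Perm (Fin n)} (h : StrictMono w) : w = 1 := by
  have : h.orderIsoOfSurjective w w.surjective = OrderIso.refl (Fin n) := Subsingleton.elim _ _
  exact Equiv.ext fun a => DFunLike.congr_fun this a

theorem inv_apply_apply (w : Perm (Fin n)) (a : Fin n) : w⁻¹ (w a) = a := w.symm_apply_apply a

theorem apply_inv_apply (w : Perm (Fin n)) (a : Fin n) : w (w⁻¹ a) = a := w.apply_symm_apply a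

/-- `i` is a left descent of `w`, i.e. `s_i w` is shorter than `w`. The condition is phrased
through the values of `w⁻¹`. -/
def IsLeftDescent (i : Fin (n - 1)) (w : Perm (Fin n)) : Prop := w⁻¹ (hi i) < w⁻¹ (lo i)

instance (i : Fin (n - 1)) (w : Perm (Fin n)) : Decidable (IsLeftDescent i w) :=
  inferInstanceAs (Decidable (_ < _))

theorem not_isLeftDescent_iff {i : Fin (n - 1)} {w : Perm (Fin n)} :
    ¬IsLeftDescent i w ↔ w⁻¹ (lo i) < w⁻¹ (hi i) := by
  have hne : w⁻¹ (lo i) ≠ w⁻¹ (hi i) := w⁻¹.injective.ne (lo_ne_hi i)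
  rw [IsLeftDescent, not_lt, hne.le_iff_lt]

theorem isLeftDescent_s_mul_iff (i : Fin (n - 1)) (w : Perm (Fin n)) :
    IsLeftDescent i (s i * w) ↔ ¬IsLeftDescent i w := by
  rw [not_isLeftDescent_iff, IsLeftDescent, mul_inv_rev, s_inv, Perm.mul_apply, Perm.mul_apply,
    s_lo, s_hi]

theorem not_isLeftDescent_one (i : Fin (n - 1)) : ¬IsLeftDescent i (1 : Perm (Fin n)) :=
  (lo_lt_hi i).not_gt

theorem exists_isLeftDescent {w : Perm (Fin n)} (hw : w ≠ 1) : ∃ i, IsLeftDescent i w := by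
  by_contra! hno
  have hmono : StrictMono (w⁻¹ : Perm (Fin n)) := fun _ _ hab =>
    lt_of_forall_lo_lt_hi hab fun i _ _ => not_isLeftDescent_iff.mp (hno i)
  exact hw (inv_eq_one.mp (perm_eq_one_of_strictMono hmono))

/-- The inversions of a permutation; their number is its length `len`. -/
def inversions (w : Perm (Fin n)) : Finset (Fin n × Fin n) :=
  {p | p.1 < p.2 ∧ w p.2 < w p.1}

theorem mem_inversions {w : Perm (Fin n)} {p : Fin n × Fin n} :
    p ∈ inversions w ↔ p.1 < p.2 ∧ w p.2 < w p.1 := by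
  simp [inversions]

theorem len_eq_card_inversions (w : Perm (Fin n)) : len w = (inversions w).card := rfl

theorem len_inv (w : Perm (Fin n)) : len w⁻¹ = len w := by
  refine Finset.card_nbij' (fun p => (w⁻¹ p.2, w⁻¹ p.1)) (fun p => (w p.2, w p.1)) ?_ ?_ ?_ ?_ <;>
    simp +contextual [Set.MapsTo, Set.LeftInvOn]

theorem len_one : len (1 : Perm (Fin n)) = 0 := by
  rw [len_eq_card_inversions, Finset.card_eq_zero, Finset.eq_empty_iff_forall_notMem]
  exact fun p hp => lt_asymm (mem_inversions.mp hp).1 (mem_inversions.mp hp).2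

theorem inversions_s_mul_of_not_isLeftDescent {i : Fin (n - 1)} {w : Perm (Fin n)}
    (h : ¬IsLeftDescent i w) :
    inversions (s i * w) = insert (w⁻¹ (lo i), w⁻¹ (hi i)) (inversions w) := by
  rw [not_isLeftDescent_iff] at h
  ext ⟨a, b⟩
  obtain ⟨a, rfl⟩ := w⁻¹.surjective a
  obtain ⟨b, rfl⟩ := w⁻¹.surjective b
  simp only [Finset.mem_insert, mem_inversions, Prod.mk.injEq, EmbeddingLike.apply_eq_iff_eq,
    Perm.mul_apply, apply_inv_apply]
  by_cases hab : a = lo i ∧ b = hi i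
  · obtain ⟨rfl, rfl⟩ := hab
    simp only [h, s_lo, s_hi, lo_lt_hi, and_self, true_or]
  by_cases hba : b = lo i ∧ a = hi i
  · obtain ⟨rfl, rfl⟩ := hba
    simp only [h.not_gt, (lo_ne_hi i).symm, false_and, or_self]
  rw [s_lt_s_iff i hba fun hba => hab hba.symm, or_iff_right hab]

theorem len_s_mul_of_not_isLeftDescent {i : Fin (n - 1)} {w : Perm (Fin n)}
    (h : ¬IsLeftDescent i w) : len (s i * w) = len w + 1 := by
  rw [len_eq_card_inversions, inversions_s_mul_of_not_isLeftDescent h,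
    Finset.card_insert_of_notMem, len_eq_card_inversions]
  simp [mem_inversions, (lo_lt_hi i).le]

theorem len_s_mul_of_isLeftDescent {i : Fin (n - 1)} {w : Perm (Fin n)}
    (h : IsLeftDescent i w) : len (s i * w) + 1 = len w := by
  have h' : ¬IsLeftDescent i (s i * w) := fun hs => (isLeftDescent_s_mul_iff i w).mp hs h
  rw [← len_s_mul_of_not_isLeftDescent h', s_mul_s_mul]

theorem len_s_mul_le (i : Fin (n - 1)) (w : Perm (Fin n)) : len (s i * w) ≤ len w + 1 := by
  by_cases h : IsLeftDescent i w
  · have := len_s_mul_of_isLeftDescent h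
    omega
  · exact (len_s_mul_of_not_isLeftDescent h).le

theorem perm_induction_of_descents (J : Set (Fin (n - 1))) {P : Perm (Fin n) → Prop}
    (base : ∀ w, (∀ i ∈ J, ¬IsLeftDescent i w) → P w)
    (step : ∀ i ∈ J, ∀ w, ¬IsLeftDescent i w → P w → P (s i * w)) (w : Perm (Fin n)) : P w := by
  induction hk : len w using Nat.strong_induction_on generalizing w with
  | _ k ih =>
    by_cases hw : ∀ i ∈ J, ¬IsLeftDescent i w
    · exact base w hw
    · push Not at hw
      obtain ⟨i, hiJ, hi⟩ := hw
      have hlen := len_s_mul_of_isLeftDescent hi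
      have := step i hiJ (s i * w) (fun hs => (isLeftDescent_s_mul_iff i w).mp hs hi)
        (ih _ (by omega) _ rfl)
      rwa [s_mul_s_mul] at this

theorem perm_induction_left {P : Perm (Fin n) → Prop} (one : P 1)
    (step : ∀ (i : Fin (n - 1)) (w : Perm (Fin n)), ¬IsLeftDescent i w → P w → P (s i * w))
    (w : Perm (Fin n)) : P w := by
  refine perm_induction_of_descents Set.univ (fun w hw => ?_) (fun i _ => step i) w
  obtain rfl : w = 1 := by
    by_contra hne
    obtain ⟨i, hi⟩ := exists_isLeftDescent hne
    exact hw i trivial hi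
  exact one

theorem s_mul_eq_mul_s_iff {i j : Fin (n - 1)} {w : Perm (Fin n)} :
    s i * w = w * s j ↔
      (w (lo j) = lo i ∧ w (hi j) = hi i) ∨ (w (lo j) = hi i ∧ w (hi j) = lo i) := by
  rw [s, s, Equiv.mul_swap_eq_swap_mul, mul_left_inj]
  constructor
  · intro h
    have hlo := Equiv.congr_fun h (w (lo j))
    rw [Equiv.swap_apply_left] at hlo
    have hne : w (hi j) ≠ w (lo j) := w.injective.ne (lo_ne_hi j).symm
    rcases Equiv.swap_apply_ne_self_iff.mp (hlo.trans_ne hne) with ⟨-, h' | h'⟩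
    · rw [h', Equiv.swap_apply_left] at hlo
      exact Or.inl ⟨h', hlo.symm⟩
    · rw [h', Equiv.swap_apply_right] at hlo
      exact Or.inr ⟨h', hlo.symm⟩
  · rintro (⟨hlo, hhi⟩ | ⟨hlo, hhi⟩)
    · rw [hlo, hhi]
    · rw [hlo, hhi, Equiv.swap_comm]

theorem isLeftDescent_inv_s_mul_iff {i j : Fin (n - 1)} {w : Perm (Fin n)}
    (h : s i * w ≠ w * s j) : IsLeftDescent j (s i * w)⁻¹ ↔ IsLeftDescent j w⁻¹ := by
  rw [Ne, s_mul_eq_mul_s_iff, not_or] at h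
  exact s_lt_s_iff i (fun hw => h.2 hw.symm) (fun hw => h.1 hw.symm)

theorem isLeftDescent_mul_s_iff {i j : Fin (n - 1)} {w : Perm (Fin n)}
    (h : s i * w ≠ w * s j) : IsLeftDescent i (w * s j) ↔ IsLeftDescent i w := by
  have h' : s j * w⁻¹ ≠ w⁻¹ * s i := fun heq => h <| by
    simpa [mul_inv_rev] using (congrArg (·⁻¹) heq).symm
  simpa [mul_inv_rev] using isLeftDescent_inv_s_mul_iff h'

theorem isLeftDescent_inv_iff_of_s_mul_eq {i j : Fin (n - 1)} {w : Perm (Fin n)}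
    (h : s i * w = w * s j) : IsLeftDescent j w⁻¹ ↔ IsLeftDescent i w := by
  rcases s_mul_eq_mul_s_iff.mp h with ⟨hlo, hhi⟩ | ⟨hlo, hhi⟩
  · have hlo' : w⁻¹ (lo i) = lo j := by rw [← hlo, inv_apply_apply]
    have hhi' : w⁻¹ (hi i) = hi j := by rw [← hhi, inv_apply_apply]
    simp only [IsLeftDescent, inv_inv, hlo, hhi, hlo', hhi', (lo_lt_hi _).not_gt]
  · have hlo' : w⁻¹ (lo i) = hi j := by rw [← hhi, inv_apply_apply]
    have hhi' : w⁻¹ (hi i) = lo j := by rw [← hlo, inv_apply_apply]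
    simp only [IsLeftDescent, inv_inv, hlo, hhi, hlo', hhi', lo_lt_hi]

end Combinatorics

section Blocks

variable {n : ℕ} {μ ν : List ℕ}

theorem blk_mono (μ : List ℕ) : Monotone (blk μ) := by
  induction μ with
  | nil => exact fun _ _ _ => le_rfl
  | cons m l ih =>
    intro a b hab
    have htail := ih (Nat.sub_le_sub_right hab m)
    simp only [blk]
    split_ifs <;> omega

theorem inYoung_s_iff (i : Fin (n - 1)) :
    InYoung μ (s i) ↔ blk μ (lo i).val = blk μ (hi i).val := by
  refine ⟨fun h => by simpa using h (hi i), fun h k => ?_⟩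
  rcases eq_or_ne k (lo i) with rfl | hlo
  · rw [s_lo, h]
  rcases eq_or_ne k (hi i) with rfl | hhi
  · rw [s_hi, h]
  · rw [s_apply_of_ne i hlo hhi]

theorem inYoung_s_of_blk_eq {a b : Fin n} (hab : blk μ a.val = blk μ b.val)
    {i : Fin (n - 1)} (ha : a ≤ lo i) (hb : hi i ≤ b) : InYoung μ (s i) := by
  rw [inYoung_s_iff]
  have hmono : Monotone fun k : Fin n => blk μ k.val := fun _ _ h => blk_mono μ h
  have h₁ : blk μ a.val ≤ blk μ (lo i).val := hmono ha
  have h₂ : blk μ (lo i).val ≤ blk μ (hi i).val := hmono (lo_lt_hi i).le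
  have h₃ : blk μ (hi i).val ≤ blk μ b.val := hmono hb
  omega

theorem InYoung.one : InYoung μ (1 : Perm (Fin n)) := fun _ => rfl

theorem InYoung.mul {u v : Perm (Fin n)} (hu : InYoung μ u) (hv : InYoung μ v) :
    InYoung μ (u * v) := fun k => (hu (v k)).trans (hv k)

theorem InYoung.inv {u : Perm (Fin n)} (hu : InYoung μ u) : InYoung μ u⁻¹ := fun k => by
  rw [← hu (u⁻¹ k), apply_inv_apply]

theorem InYoung.s_of_isLeftDescent {u : Perm (Fin n)} (hu : InYoung μ u) {i : Fin (n - 1)}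
    (h : IsLeftDescent i u) : InYoung μ (s i) := by
  rw [inYoung_s_iff]
  refine le_antisymm (blk_mono μ (lo_lt_hi i).le) ?_
  rw [← hu.inv (hi i), ← hu.inv (lo i)]
  exact blk_mono μ (le_of_lt h)

/-- `w` is the element of minimal length in its coset `S_μ w`, expressed by the condition that
`w⁻¹` increases on every block of `μ`. -/
def IsMinCosetRep (μ : List ℕ) (w : Perm (Fin n)) : Prop :=
  ∀ a b : Fin n, a < b → blk μ a.val = blk μ b.val → w⁻¹ a < w⁻¹ b

theorem isMinCosetRep_iff {w : Perm (Fin n)} :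
    IsMinCosetRep μ w ↔ ∀ i, InYoung μ (s i) → ¬IsLeftDescent i w := by
  constructor
  · exact fun h i hi => not_isLeftDescent_iff.mpr (h _ _ (lo_lt_hi i) ((inYoung_s_iff i).mp hi))
  · exact fun h a b hab hblk => lt_of_forall_lo_lt_hi hab fun i ha hb =>
      not_isLeftDescent_iff.mp (h i (inYoung_s_of_blk_eq hblk ha hb))

theorem IsMinCosetRep.eq_one {u x : Perm (Fin n)} (hx : IsMinCosetRep μ x) (hu : InYoung μ u)
    (hux : IsMinCosetRep μ (u * x)) : u = 1 := by
  by_contra hne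
  obtain ⟨i, hdesc⟩ := exists_isLeftDescent hne
  have hs := hu.s_of_isLeftDescent hdesc
  have hlt : x⁻¹ (u⁻¹ (hi i)) < x⁻¹ (u⁻¹ (lo i)) :=
    hx _ _ hdesc (by rw [hu.inv, hu.inv, (inYoung_s_iff i).mp hs])
  refine isMinCosetRep_iff.mp hux i hs ?_
  rwa [IsLeftDescent, mul_inv_rev, Perm.mul_apply, Perm.mul_apply]

theorem perm_induction_young (μ : List ℕ) {P : Perm (Fin n) → Prop}
    (base : ∀ w, IsMinCosetRep μ w → P w)
    (step : ∀ i, InYoung μ (s i) → ∀ w, ¬IsLeftDescent i w → P w → P (s i * w))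
    (w : Perm (Fin n)) : P w :=
  perm_induction_of_descents {i | InYoung μ (s i)}
    (fun w hw => base w (isMinCosetRep_iff.mpr hw)) step w

/-- The pairs of positions `(a, b)` such that the block of `a` comes before that of `b`. -/
def crossPairs (n : ℕ) (μ : List ℕ) : Finset (Fin n × Fin n) :=
  {p | blk μ p.1.val < blk μ p.2.val}

theorem mem_crossPairs {p : Fin n × Fin n} :
    p ∈ crossPairs n μ ↔ blk μ p.1.val < blk μ p.2.val := by
  simp [crossPairs]

theorem IsMinCosetRep.inversions_inv_subset {w : Perm (Fin n)} (h : IsMinCosetRep μ w) :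
    inversions w⁻¹ ⊆ crossPairs n μ := by
  intro p hp
  rw [mem_inversions] at hp
  exact mem_crossPairs.mpr ((blk_mono μ hp.1.le).lt_of_ne fun hb => lt_asymm hp.2 (h _ _ hp.1 hb))

theorem inversions_injective :
    Function.Injective (inversions : Perm (Fin n) → Finset (Fin n × Fin n)) := by
  intro v w h
  have hiff : ∀ {a b : Fin n}, a < b → (v b < v a ↔ w b < w a) := fun {a b} hab => by
    simpa [mem_inversions, hab] using congrArg ((a, b) ∈ ·) h
  refine mul_inv_eq_one.mp (perm_eq_one_of_strictMono fun x y hxy => ?_)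
  obtain ⟨a, rfl⟩ := w.surjective x
  obtain ⟨b, rfl⟩ := w.surjective y
  rw [Perm.mul_apply, Perm.mul_apply, inv_apply_apply, inv_apply_apply]
  rcases lt_trichotomy a b with hab | rfl | hba
  · exact (le_of_not_gt fun hv => lt_asymm hxy ((hiff hab).mp hv)).lt_of_ne (v.injective.ne hab.ne)
  · exact absurd hxy (lt_irrefl _)
  · exact (hiff hba).mpr hxy

/-- `d⁻¹` moves the blocks of `μ`, each in its own order, into the opposite order, and carries
them to the blocks of `ν`. -/
structure IsBlockReversal (μ ν : List ℕ) (d : Perm (Fin n)) : Prop where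
  inv_lt_inv_iff (a b : Fin n) : d⁻¹ a < d⁻¹ b ↔
    blk μ b.val < blk μ a.val ∨ blk μ a.val = blk μ b.val ∧ a < b
  blk_inv_eq_iff (a b : Fin n) :
    blk ν (d⁻¹ a).val = blk ν (d⁻¹ b).val ↔ blk μ a.val = blk μ b.val

namespace IsBlockReversal

variable {d : Perm (Fin n)}

theorem inversions_inv (hd : IsBlockReversal μ ν d) : inversions d⁻¹ = crossPairs n μ := by
  ext ⟨a, b⟩
  rw [mem_inversions, mem_crossPairs, hd.inv_lt_inv_iff]
  have hlt : blk μ a.val < blk μ b.val → a < b := (blk_mono μ).reflect_lt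
  grind

theorem len_eq (hd : IsBlockReversal μ ν d) : len d = (crossPairs n μ).card := by
  rw [← len_inv, len_eq_card_inversions, hd.inversions_inv]

theorem len_le_len_mul (hd : IsBlockReversal μ ν d) {u : Perm (Fin n)} (hu : InYoung μ u) :
    len d ≤ len (u * d) := by
  rw [hd.len_eq, ← len_inv (u * d)]
  refine Finset.card_le_card fun p hp => ?_
  rw [mem_crossPairs] at hp
  refine mem_inversions.mpr ⟨(blk_mono μ).reflect_lt hp, ?_⟩
  rw [mul_inv_rev, Perm.mul_apply, Perm.mul_apply, hd.inv_lt_inv_iff, hu.inv, hu.inv]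
  exact Or.inl hp

theorem inYoung_conj (hd : IsBlockReversal μ ν d) {v : Perm (Fin n)} (hv : InYoung ν v) :
    InYoung μ (d * v * d⁻¹) := fun k => by
  rw [← hd.blk_inv_eq_iff, Perm.mul_apply, Perm.mul_apply, inv_apply_apply, hv]

theorem isMinDC (hd : IsBlockReversal μ ν d) : IsMinDC μ ν d := fun u v hu hv => by
  calc len d ≤ len (u * (d * v * d⁻¹) * d) := hd.len_le_len_mul (hu.mul (hd.inYoung_conj hv))
    _ = len (u * d * v) := by group

theorem isMinCosetRep (hd : IsBlockReversal μ ν d) : IsMinCosetRep μ d := fun _ _ hab h =>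
  (hd.inv_lt_inv_iff _ _).mpr (Or.inr ⟨h, hab⟩)

theorem len_le (hd : IsBlockReversal μ ν d) {w : Perm (Fin n)} (hw : IsMinCosetRep μ w) :
    len w ≤ len d := by
  rw [hd.len_eq, ← len_inv w]
  exact Finset.card_le_card hw.inversions_inv_subset

theorem lt_iff (hd : IsBlockReversal μ ν d) (a b : Fin n) : a < b ↔
    blk μ (d b).val < blk μ (d a).val ∨ blk μ (d a).val = blk μ (d b).val ∧ d a < d b := by
  rw [← hd.inv_lt_inv_iff, inv_apply_apply, inv_apply_apply]

theorem blk_apply_eq_iff (hd : IsBlockReversal μ ν d) (a b : Fin n) :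
    blk μ (d a).val = blk μ (d b).val ↔ blk ν a.val = blk ν b.val := by
  rw [← hd.blk_inv_eq_iff, inv_apply_apply, inv_apply_apply]

theorem covBy_of_inYoung_s (hd : IsBlockReversal μ ν d) {j : Fin (n - 1)}
    (hj : InYoung ν (s j)) : d (lo j) ⋖ d (hi j) := by
  have hblk := (hd.blk_apply_eq_iff _ _).mpr ((inYoung_s_iff j).mp hj)
  have hlt : d (lo j) < d (hi j) := by
    have := (hd.lt_iff _ _).mp (lo_lt_hi j)
    omega
  refine ⟨hlt, fun c hloc hchi => ?_⟩
  obtain ⟨c, rfl⟩ := d.surjective c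
  have h₁ : blk μ (d (lo j)).val ≤ blk μ (d c).val := blk_mono μ hloc.le
  have h₂ : blk μ (d c).val ≤ blk μ (d (hi j)).val := blk_mono μ hchi.le
  have hlo : lo j < c := (hd.lt_iff _ _).mpr (Or.inr ⟨by omega, hloc⟩)
  have hhi : c < hi j := (hd.lt_iff _ _).mpr (Or.inr ⟨by omega, hchi⟩)
  exact absurd (Nat.succ_le_of_lt hlo) (not_le_of_gt hhi)

theorem exists_apply_lo_eq (hd : IsBlockReversal μ ν d) {j : Fin (n - 1)}
    (hj : InYoung ν (s j)) :
    ∃ i : Fin (n - 1), InYoung μ (s i) ∧ d (lo j) = lo i ∧ d (hi j) = hi i := by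
  have hsucc : (d (lo j)).val + 1 = (d (hi j)).val :=
    Nat.covBy_iff_add_one_eq.mp (Fin.covBy_iff.mp (hd.covBy_of_inYoung_s hj))
  have hhi : d (hi j) = hi ⟨(d (lo j)).val, by omega⟩ := Fin.ext hsucc.symm
  refine ⟨⟨(d (lo j)).val, by omega⟩, ?_, rfl, hhi⟩
  rw [inYoung_s_iff, ← hhi]
  exact (hd.blk_apply_eq_iff _ _).mpr ((inYoung_s_iff j).mp hj)

theorem len_inv_mul (hd : IsBlockReversal μ ν d) {x : Perm (Fin n)} (hx : IsMinCosetRep μ x) :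
    len (x⁻¹ * d) = (crossPairs n μ \ inversions x⁻¹).card := by
  refine Finset.card_nbij' (fun p => (d p.2, d p.1)) (fun p => (d⁻¹ p.2, d⁻¹ p.1))
    (fun p hp => ?_) (fun p hp => ?_) (fun p _ => ?_) (fun p _ => ?_)
  · obtain ⟨hlt, hinv⟩ := mem_inversions.mp hp
    rw [Finset.mem_coe, Finset.mem_sdiff, mem_crossPairs, mem_inversions]
    refine ⟨?_, fun h => lt_asymm hinv h.2⟩
    rcases (hd.lt_iff _ _).mp hlt with h | ⟨hblk, hdlt⟩
    · exact h
    · exact absurd (hx _ _ hdlt hblk) hinv.not_gt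
  · rw [Finset.mem_coe, Finset.mem_sdiff, mem_crossPairs, mem_inversions, not_and, not_lt] at hp
    have hlt : p.1 < p.2 := (blk_mono μ).reflect_lt hp.1
    refine mem_inversions.mpr ⟨(hd.inv_lt_inv_iff _ _).mpr (Or.inl hp.1), ?_⟩
    rw [Perm.mul_apply, Perm.mul_apply, apply_inv_apply, apply_inv_apply]
    exact (hp.2 hlt).lt_of_ne (x⁻¹.injective.ne hlt.ne)
  · simp only [inv_apply_apply]
  · simp only [apply_inv_apply]

theorem len_add_len (hd : IsBlockReversal μ ν d) {x : Perm (Fin n)} (hx : IsMinCosetRep μ x) :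
    len x + len (x⁻¹ * d) = len d := by
  rw [hd.len_inv_mul hx, ← len_inv x, len_eq_card_inversions, hd.len_eq, add_comm]
  exact Finset.card_sdiff_add_card_eq_card hx.inversions_inv_subset

theorem isMinCosetRep_mul_inv (hd : IsBlockReversal μ ν d) {w : Perm (Fin n)}
    (hw : IsMinCosetRep ν w⁻¹) : IsMinCosetRep μ (d * w⁻¹) := by
  intro a b hab h
  rw [mul_inv_rev, Perm.mul_apply, Perm.mul_apply]
  exact hw _ _ (hd.isMinCosetRep a b hab h) ((hd.blk_inv_eq_iff a b).mpr h)

end IsBlockReversal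

/-- The position of `a` after the blocks of `μ` have been put in the opposite order. -/
def reversePos : List ℕ → ℕ → ℕ
  | [], a => a
  | m :: l, a => if a < m then l.sum + a else reversePos l (a - m)

theorem reversePos_lt (μ : List ℕ) {a : ℕ} (h : a < μ.sum) : reversePos μ a < μ.sum := by
  induction μ generalizing a with
  | nil => exact h
  | cons m l ih =>
    simp only [reversePos, List.sum_cons] at *
    split_ifs with ham
    · omega
    · exact (ih (a := a - m) (by omega)).trans_le (Nat.le_add_left _ _)

theorem reversePos_lt_reversePos_iff (μ : List ℕ) {a b : ℕ} (ha : a < μ.sum) (hb : b < μ.sum) :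
    reversePos μ a < reversePos μ b ↔ blk μ b < blk μ a ∨ blk μ a = blk μ b ∧ a < b := by
  induction μ generalizing a b with
  | nil => exact absurd ha (Nat.not_lt_zero a)
  | cons m l ih =>
    simp only [reversePos, blk, List.sum_cons] at *
    split_ifs with ham hbm hbm
    · omega
    · have := reversePos_lt l (a := b - m) (by omega)
      grind
    · have := reversePos_lt l (a := a - m) (by omega)
      omega
    · rw [ih (by omega) (by omega)]
      omega

theorem blk_append_of_lt (l l' : List ℕ) {k : ℕ} (h : k < l.sum) :
    blk (l ++ l') k = blk l k := by
  induction l generalizing k with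
  | nil => exact absurd h (Nat.not_lt_zero k)
  | cons m l ih =>
    simp only [blk, List.cons_append, List.sum_cons] at *
    split_ifs with hkm
    · rfl
    · rw [ih (by omega)]

theorem blk_append_singleton (l : List ℕ) {m k : ℕ} (h : l.sum ≤ k) (h' : k < l.sum + m) :
    blk (l ++ [m]) k = l.length := by
  induction l generalizing k with
  | nil => simpa [blk] using h'
  | cons a l ih =>
    simp only [blk, List.cons_append, List.sum_cons, List.length_cons] at *
    rw [if_neg (by omega), ih (by omega) (by omega)]

theorem blk_reverse_reversePos (μ : List ℕ) {a : ℕ} (h : a < μ.sum) :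
    blk μ.reverse (reversePos μ a) + blk μ a + 1 = μ.length := by
  induction μ generalizing a with
  | nil => exact absurd h (Nat.not_lt_zero a)
  | cons m l ih =>
    simp only [reversePos, blk, List.sum_cons, List.reverse_cons, List.length_cons] at *
    split_ifs with ham
    · rw [blk_append_singleton _ (by simp) (by simpa using ham), List.length_reverse, add_zero]
    · have ham' : a - m < l.sum := by omega
      rw [blk_append_of_lt _ _ (by simpa using reversePos_lt l ham'), ← ih ham']
      omega

theorem exists_isBlockReversal (hμ : μ.sum = n) :
    ∃ d : Perm (Fin n), IsBlockReversal μ μ.reverse d := by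
  subst hμ
  let f : Fin μ.sum → Fin μ.sum := fun a => ⟨reversePos μ a.val, reversePos_lt μ a.isLt⟩
  have hlt (a b : Fin μ.sum) :
      f a < f b ↔ blk μ b.val < blk μ a.val ∨ blk μ a.val = blk μ b.val ∧ a < b :=
    reversePos_lt_reversePos_iff μ a.isLt b.isLt
  have hinj : Function.Injective f := fun a b hab => by
    have h₁ := (hlt a b).not.mp hab.not_lt
    have h₂ := (hlt b a).not.mp hab.not_gt
    omega
  let e : Perm (Fin μ.sum) := Equiv.ofBijective f (Finite.injective_iff_bijective.mp hinj)
  refine ⟨e⁻¹, hlt, fun a b => ?_⟩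
  have ha := blk_reverse_reversePos μ a.isLt
  have hb := blk_reverse_reversePos μ b.isLt
  change blk μ.reverse (reversePos μ a.val) = blk μ.reverse (reversePos μ b.val) ↔ _
  omega

theorem isBlockReversal_of_longest (hμ : μ.sum = n) {d : Perm (Fin n)}
    (hdmin : IsMinDC μ μ.reverse d)
    (hdlong : ∀ x : Perm (Fin n), IsMinDC μ μ.reverse x → len x ≤ len d) :
    IsBlockReversal μ μ.reverse d := by
  obtain ⟨d₀, hd₀⟩ := exists_isBlockReversal hμ
  have hrep : IsMinCosetRep μ d := isMinCosetRep_iff.mpr fun i hs hi => by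
    have hle := hdmin (s i) 1 hs InYoung.one
    have hlen := len_s_mul_of_isLeftDescent hi
    rw [mul_one] at hle
    omega
  have hcard : (crossPairs n μ).card ≤ (inversions d⁻¹).card := by
    rw [← hd₀.len_eq, ← len_eq_card_inversions, len_inv]
    exact hdlong d₀ hd₀.isMinDC
  have hinv : inversions d⁻¹ = inversions d₀⁻¹ :=
    (Finset.eq_of_subset_of_card_le hrep.inversions_inv_subset hcard).trans
      hd₀.inversions_inv.symm
  rwa [inv_inj.mp (inversions_injective hinv)]

end Blocks

section Clifford

/-- The two families of symmetric generators of `H_n`: `c` stands for the `C_k` and `y` for the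
`C_k X_k`. -/
inductive Colour
  | c
  | y

/-- The index of the generator of colour `ε` that does not merely get permuted when `T_i` passes
it. -/
def Colour.pivot {n : ℕ} : Colour → Fin (n - 1) → Fin n
  | c, i => hi i
  | y, i => lo i

variable {n : ℕ}

theorem s_pivot_ne (ε : Colour) (i : Fin (n - 1)) : s i (ε.pivot i) ≠ ε.pivot i := by
  cases ε
  · simpa only [Colour.pivot, s_hi] using lo_ne_hi i
  · simpa only [Colour.pivot, s_lo] using (lo_ne_hi i).symm

theorem s_s_apply (i : Fin (n - 1)) (k : Fin n) : s i (s i k) = k := by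
  rw [← Equiv.Perm.mul_apply, s_mul_self, Equiv.Perm.one_apply]

theorem s_apply_of_ne_pivot {ε : Colour} {i : Fin (n - 1)} {k : Fin n} (h : k ≠ ε.pivot i)
    (h' : k ≠ s i (ε.pivot i)) : s i k = k := by
  cases ε <;> simp only [Colour.pivot, s_lo, s_hi] at h h'
  · exact s_apply_of_ne i h' h
  · exact s_apply_of_ne i h h'

theorem pivot_eq_of_pivot_ne {ε δ : Colour} {i : Fin (n - 1)} (h : δ.pivot i ≠ s i (ε.pivot i)) :
    δ = ε := by
  cases ε <;> cases δ <;> first | rfl | simp [Colour.pivot] at h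

/-- A Clifford family: each element squares to `1`, and elements at different indices anticommute,
whatever their colours. Nothing is required of the two colours at the same index. -/
structure IsCliffordFamily {B : Type*} [Ring B] (z : Colour → Fin n → B) : Prop where
  sq (ε : Colour) (k : Fin n) : z ε k * z ε k = 1
  anti (ε δ : Colour) {k l : Fin n} : k ≠ l → z ε k * z δ l = -(z δ l * z ε k)

/-- The correction term, still to be scaled by `ξ`, that arises when `T_i` passes `z ε k`. -/
def swapDefect {B : Type*} [Ring B] (z : Colour → Fin n → B) (i : Fin (n - 1)) (ε : Colour)
    (k : Fin n) : B :=
  if k = ε.pivot i then z ε k - z ε (s i k) else 0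

theorem map_swapDefect {F B B' : Type*} [CommSemiring F] [Ring B] [Algebra F B] [Ring B']
    [Algebra F B'] (f : B →ₐ[F] B') (z : Colour → Fin n → B) (i : Fin (n - 1)) (ε : Colour)
    (k : Fin n) : f (swapDefect z i ε k) = swapDefect (fun ε k => f (z ε k)) i ε k := by
  unfold swapDefect
  split_ifs
  · exact map_sub f _ _
  · exact map_zero f

/-- The upper triangular matrix with rows `(a, b)` and `(0, d)`. An algebra homomorphism into these
matrices encodes, in its corner, a derivation twisted by its diagonal. -/
def upperTri {B : Type*} [Ring B] (a b d : B) : Matrix (Fin 2) (Fin 2) B := !![a, b; 0, d]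

theorem upperTri_mul {B : Type*} [Ring B] (a b d a' b' d' : B) :
    upperTri a b d * upperTri a' b' d' = upperTri (a * a') (a * b' + b * d') (d * d') := by
  simp [upperTri]

theorem upperTri_add {B : Type*} [Ring B] (a b d a' b' d' : B) :
    upperTri a b d + upperTri a' b' d' = upperTri (a + a') (b + b') (d + d') := by
  simp [upperTri]

theorem upperTri_zero {B : Type*} [Ring B] : upperTri (0 : B) 0 0 = 0 := by
  ext i j
  fin_cases i <;> fin_cases j <;> rfl

namespace IsCliffordFamily

variable {B : Type*} [Ring B] {z : Colour → Fin n → B}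

theorem comp (h : IsCliffordFamily z) (w : Perm (Fin n)) :
    IsCliffordFamily fun ε k => z ε (w k) where
  sq _ _ := h.sq _ _
  anti _ _ _ _ hkl := h.anti _ _ (w.injective.ne hkl)

theorem map (h : IsCliffordFamily z) {F B' : Type*} [CommSemiring F] [Algebra F B] [Ring B']
    [Algebra F B'] (f : B →ₐ[F] B') : IsCliffordFamily fun ε k => f (z ε k) where
  sq ε k := by rw [← map_mul, h.sq, map_one]
  anti ε δ _ _ hkl := by rw [← map_mul, h.anti ε δ hkl, map_neg, map_mul]

theorem swapDefect_sq (h : IsCliffordFamily z) (i : Fin (n - 1)) (ε : Colour) (k : Fin n) :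
    z ε (s i k) * swapDefect z i ε k + swapDefect z i ε k * z ε k = 0 := by
  unfold swapDefect
  split_ifs
  · rw [mul_sub, sub_mul, h.sq, h.sq]
    abel
  · rw [mul_zero, zero_mul, add_zero]

theorem swapDefect_anti_of_ne_pivot (h : IsCliffordFamily z) {i : Fin (n - 1)} (ε : Colour)
    {δ : Colour} {k l : Fin n} (hkl : k ≠ l) (hl : l ≠ δ.pivot i) :
    swapDefect z i ε k * z δ l + z δ (s i l) * swapDefect z i ε k = 0 := by
  unfold swapDefect
  split_ifs with hk
  · subst hk
    by_cases hsl : l = s i (ε.pivot i)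
    · obtain rfl : ε = δ := (pivot_eq_of_pivot_ne (hsl ▸ hl.symm)).symm
      rw [hsl, s_s_apply, sub_mul, mul_sub, h.sq, h.sq]
      abel
    · rw [s_apply_of_ne_pivot hkl.symm hsl, sub_mul, mul_sub, h.anti ε δ hkl,
        h.anti ε δ (Ne.symm hsl)]
      abel
  · rw [mul_zero, zero_mul, add_zero]

theorem swapDefect_anti_of_eq_pivot (h : IsCliffordFamily z) {i : Fin (n - 1)} {ε δ : Colour}
    {k l : Fin n} (hkl : k ≠ l) (hk : k = ε.pivot i) (hl : l = δ.pivot i) :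
    z ε (s i k) * swapDefect z i δ l + swapDefect z i ε k * z δ l +
      (z δ (s i l) * swapDefect z i ε k + swapDefect z i δ l * z ε k) = 0 := by
  have hlk : l = s i k := by
    by_contra hne
    exact hkl (hk.trans ((pivot_eq_of_pivot_ne (hk ▸ hl ▸ hne) : δ = ε) ▸ hl.symm))
  rw [swapDefect, swapDefect, if_pos hk, if_pos hl, hlk, s_s_apply]
  rw [hlk] at hkl
  rw [mul_sub, sub_mul, mul_sub, sub_mul, h.anti δ ε hkl.symm, h.anti δ ε hkl]
  abel

theorem swapDefect_anti (h : IsCliffordFamily z) (i : Fin (n - 1)) (ε δ : Colour) {k l : Fin n}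
    (hkl : k ≠ l) :
    z ε (s i k) * swapDefect z i δ l + swapDefect z i ε k * z δ l +
      (z δ (s i l) * swapDefect z i ε k + swapDefect z i δ l * z ε k) = 0 := by
  by_cases hk : k = ε.pivot i <;> by_cases hl : l = δ.pivot i
  · exact h.swapDefect_anti_of_eq_pivot hkl hk hl
  · simpa [swapDefect, hl] using h.swapDefect_anti_of_ne_pivot ε hkl hl
  · simpa [swapDefect, hk, add_comm] using h.swapDefect_anti_of_ne_pivot δ hkl.symm hk
  · simp [swapDefect, hk, hl]

variable {F : Type*} [Field F] [Algebra F B]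

theorem upperTri_swapDefect (h : IsCliffordFamily z) (ξ : F) (i : Fin (n - 1)) :
    IsCliffordFamily fun ε k => upperTri (z ε (s i k)) (ξ • swapDefect z i ε k) (z ε k) where
  sq ε k := by
    rw [upperTri_mul, h.sq, h.sq, mul_smul_comm, smul_mul_assoc, ← smul_add, h.swapDefect_sq,
      smul_zero, upperTri, Matrix.one_fin_two]
  anti ε δ k l hkl := by
    rw [eq_neg_iff_add_eq_zero, upperTri_mul, upperTri_mul, upperTri_add, h.anti ε δ hkl,
      h.anti ε δ ((s i).injective.ne hkl), neg_add_cancel, neg_add_cancel]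
    simp only [mul_smul_comm, smul_mul_assoc, ← smul_add, h.swapDefect_anti i ε δ hkl, smul_zero,
      upperTri_zero]

end IsCliffordFamily

end Clifford

section PolyClifford

variable (F : Type*) [Field F]

/-- The relations of a Clifford family, imposed on the free algebra. -/
inductive CliffordRel (n : ℕ) :
    FreeAlgebra F (Colour × Fin n) → FreeAlgebra F (Colour × Fin n) → Prop
  | sq (ε : Colour) (k : Fin n) :
      CliffordRel n (FreeAlgebra.ι F (ε, k) * FreeAlgebra.ι F (ε, k)) 1
  | anti (ε δ : Colour) {k l : Fin n} (hkl : k ≠ l) :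
      CliffordRel n (FreeAlgebra.ι F (ε, k) * FreeAlgebra.ι F (δ, l))
        (-(FreeAlgebra.ι F (δ, l) * FreeAlgebra.ι F (ε, k)))

/-- The polynomial–Clifford algebra, the universal algebra on a Clifford family. With `cliffordGen`
read as `C_k` and `C_k X_k`, it is the subalgebra of `H_n` generated by the `X_k^{±1}` and `C_k`. -/
def PolyClifford (n : ℕ) : Type _ := RingQuot (CliffordRel F n)

variable {n : ℕ}

noncomputable instance : Ring (PolyClifford F n) := inferInstanceAs (Ring (RingQuot _))

noncomputable instance : Algebra F (PolyClifford F n) := inferInstanceAs (Algebra F (RingQuot _))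

/-- The quotient map from the free algebra. -/
noncomputable def PolyClifford.mk : FreeAlgebra F (Colour × Fin n) →ₐ[F] PolyClifford F n :=
  RingQuot.mkAlgHom F (CliffordRel F n)

/-- The universal Clifford family. -/
noncomputable def cliffordGen (ε : Colour) (k : Fin n) : PolyClifford F n :=
  PolyClifford.mk F (FreeAlgebra.ι F (ε, k))

theorem isCliffordFamily_cliffordGen : IsCliffordFamily (cliffordGen F (n := n)) where
  sq ε k := by
    have h : PolyClifford.mk F _ = PolyClifford.mk F _ :=
      RingQuot.mkAlgHom_rel F (CliffordRel.sq ε k)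
    rwa [map_mul, map_one] at h
  anti ε δ _ _ hkl := by
    have h : PolyClifford.mk F _ = PolyClifford.mk F _ :=
      RingQuot.mkAlgHom_rel F (CliffordRel.anti ε δ hkl)
    rwa [map_mul, map_neg, map_mul] at h

variable {F}

namespace IsCliffordFamily

variable {B : Type*} [Ring B] [Algebra F B] {z : Colour → Fin n → B}

/-- The universal property of the polynomial–Clifford algebra. -/
noncomputable def lift (h : IsCliffordFamily z) : PolyClifford F n →ₐ[F] B :=
  RingQuot.liftAlgHom F ⟨FreeAlgebra.lift F fun g => z g.1 g.2, fun _ _ hab => by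
    cases hab with
    | sq ε k => simpa using h.sq ε k
    | anti ε δ hkl => simpa using h.anti ε δ hkl⟩

@[simp]
theorem lift_cliffordGen (h : IsCliffordFamily z) (ε : Colour) (k : Fin n) :
    h.lift (cliffordGen F ε k) = z ε k :=
  (RingQuot.liftAlgHom_mkAlgHom_apply ..).trans (FreeAlgebra.lift_ι_apply ..)

end IsCliffordFamily

namespace PolyClifford

@[elab_as_elim]
theorem induction {p : PolyClifford F n → Prop} (gen : ∀ ε k, p (cliffordGen F ε k))
    (algebraMap : ∀ r : F, p (algebraMap F _ r)) (add : ∀ a b, p a → p b → p (a + b))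
    (mul : ∀ a b, p a → p b → p (a * b)) (a : PolyClifford F n) : p a := by
  obtain ⟨a, rfl⟩ : ∃ b, PolyClifford.mk F b = a := RingQuot.mkAlgHom_surjective F _ a
  induction a using FreeAlgebra.induction with
  | grade0 r => simpa only [AlgHom.commutes] using algebraMap r
  | grade1 g => exact gen g.1 g.2
  | mul a b ha hb => simpa only [map_mul] using mul _ _ ha hb
  | add a b ha hb => simpa only [map_add] using add _ _ ha hb

theorem algHom_ext {B : Type*} [Ring B] [Algebra F B] {f g : PolyClifford F n →ₐ[F] B}
    (h : ∀ ε k, f (cliffordGen F ε k) = g (cliffordGen F ε k)) : f = g := by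
  refine AlgHom.ext fun a => ?_
  induction a using PolyClifford.induction with
  | gen ε k => exact h ε k
  | algebraMap r => rw [AlgHom.commutes, AlgHom.commutes]
  | add a b ha hb => rw [map_add, map_add, ha, hb]
  | mul a b ha hb => rw [map_mul, map_mul, ha, hb]

/-- The symmetric group acts on the polynomial–Clifford algebra by permuting the indices. -/
noncomputable def perm (w : Perm (Fin n)) : PolyClifford F n →ₐ[F] PolyClifford F n :=
  ((isCliffordFamily_cliffordGen F).comp w).lift

@[simp]
theorem perm_cliffordGen (w : Perm (Fin n)) (ε : Colour) (k : Fin n) :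
    perm w (cliffordGen F ε k) = cliffordGen F ε (w k) :=
  IsCliffordFamily.lift_cliffordGen _ _ _

theorem perm_mul (w v : Perm (Fin n)) (a : PolyClifford F n) :
    perm (w * v) a = perm w (perm v a) :=
  DFunLike.congr_fun (algHom_ext (g := (perm w).comp (perm v)) fun ε k => by simp) a

theorem perm_one (a : PolyClifford F n) : perm 1 a = a :=
  DFunLike.congr_fun (algHom_ext (g := AlgHom.id F _) fun ε k => by simp) a

/-- The skew derivation `∂_i` with `T_i a = (s_i a) T_i + ∂_i a`, the corner entry of
the homomorphism to upper triangular matrices that extends `z ↦ (s_i z, ξ • defect; 0, z)`. -/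
noncomputable def skewDer (ξ : F) (i : Fin (n - 1)) : PolyClifford F n →ₗ[F] PolyClifford F n where
  toFun a := ((isCliffordFamily_cliffordGen F).upperTri_swapDefect ξ i).lift (F := F) a 0 1
  map_add' a b := by rw [map_add, Matrix.add_apply]
  map_smul' r a := by rw [map_smul, Matrix.smul_apply, RingHom.id_apply]

theorem lift_upperTri (ξ : F) (i : Fin (n - 1)) (a : PolyClifford F n) :
    ((isCliffordFamily_cliffordGen F).upperTri_swapDefect ξ i).lift (F := F) a =
      upperTri (perm (s i) a) (skewDer ξ i a) a := by
  have diagonal : ((isCliffordFamily_cliffordGen F).upperTri_swapDefect ξ i).lift (F := F) a =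
      upperTri (perm (s i) a)
        (((isCliffordFamily_cliffordGen F).upperTri_swapDefect ξ i).lift (F := F) a 0 1) a := by
    induction a using PolyClifford.induction with
    | gen ε k =>
      rw [IsCliffordFamily.lift_cliffordGen, perm_cliffordGen]
      rfl
    | algebraMap r =>
      rw [AlgHom.commutes, AlgHom.commutes, Matrix.algebraMap_eq_diagonal]
      ext k l
      fin_cases k <;> fin_cases l <;> rfl
    | add a b ha hb =>
      rw [map_add, ha, hb, upperTri_add, map_add]
      rfl
    | mul a b ha hb =>
      rw [map_mul, ha, hb, upperTri_mul, map_mul]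
      rfl
  exact diagonal

theorem skewDer_cliffordGen (ξ : F) (i : Fin (n - 1)) (ε : Colour) (k : Fin n) :
    skewDer ξ i (cliffordGen F ε k) = ξ • swapDefect (cliffordGen F) i ε k := by
  have h := congrFun₂ (lift_upperTri ξ i (cliffordGen F ε k)) 0 1
  rw [IsCliffordFamily.lift_cliffordGen] at h
  exact h.symm

theorem skewDer_mul (ξ : F) (i : Fin (n - 1)) (a b : PolyClifford F n) :
    skewDer ξ i (a * b) = perm (s i) a * skewDer ξ i b + skewDer ξ i a * b := by
  have h := lift_upperTri ξ i (a * b)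
  rw [map_mul, lift_upperTri, lift_upperTri, upperTri_mul] at h
  exact (congrFun₂ h 0 1).symm

theorem skewDer_one (ξ : F) (i : Fin (n - 1)) : skewDer ξ i (1 : PolyClifford F n) = 0 := by
  simpa only [mul_one, map_one, one_mul, left_eq_add] using
    skewDer_mul ξ i (1 : PolyClifford F n) 1

end PolyClifford

end PolyClifford

section Crossing

variable {F R : Type*} [Field F] [Ring R] [Algebra F R] {n : ℕ} {ξ : F} {t u : R}
  {z : Colour → Fin n → R} {i j : Fin (n - 1)}

theorem mul_sub_algebraMap_of_sq (ht : t * t = ξ • t + 1) : t * (t - algebraMap F R ξ) = 1 := by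
  rw [mul_sub, ht, ← Algebra.commutes, ← Algebra.smul_def, add_sub_cancel_left]

theorem sub_algebraMap_mul_of_sq (ht : t * t = ξ • t + 1) : (t - algebraMap F R ξ) * t = 1 := by
  rw [sub_mul, ht, ← Algebra.smul_def, add_sub_cancel_left]

/-- The rule by which `t`, in the role of `T_i`, passes the generators. -/
def Crosses (ξ : F) (i : Fin (n - 1)) (z : Colour → Fin n → R) (t : R) : Prop :=
  ∀ ε k, t * z ε k = z ε (s i k) * t + ξ • swapDefect z i ε k

theorem swapDefect_pivot (i : Fin (n - 1)) (z : Colour → Fin n → R) (ε : Colour) :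
    swapDefect z i ε (ε.pivot i) = z ε (ε.pivot i) - z ε (s i (ε.pivot i)) :=
  if_pos rfl

theorem swapDefect_of_ne {ε : Colour} {k : Fin n} (z : Colour → Fin n → R)
    (hk : k ≠ ε.pivot i) : swapDefect z i ε k = 0 :=
  if_neg hk

namespace Crosses

theorem of_generators (ht : t * t = ξ • t + 1)
    (pivot : ∀ ε : Colour, t * z ε (s i (ε.pivot i)) = z ε (ε.pivot i) * t)
    (other : ∀ ε k, s i k = k → Commute t (z ε k)) : Crosses ξ i z t := by
  intro ε k
  by_cases hk : k = ε.pivot i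
  · have conj : z ε (s i k) * (t - algebraMap F R ξ) = (t - algebraMap F R ξ) * z ε k := by
      calc z ε (s i k) * (t - algebraMap F R ξ)
          = (t - algebraMap F R ξ) * (t * z ε (s i k)) * (t - algebraMap F R ξ) := by
            rw [← mul_assoc, sub_algebraMap_mul_of_sq ht, one_mul]
        _ = (t - algebraMap F R ξ) * z ε k := by
            rw [hk, pivot, mul_assoc, mul_assoc, mul_sub_algebraMap_of_sq ht, mul_one]
    rw [mul_sub, sub_mul, ← Algebra.commutes, ← Algebra.smul_def, ← Algebra.smul_def] at conj
    rw [hk, swapDefect_pivot, ← hk, smul_sub, add_sub_left_comm, ← sub_eq_iff_eq_add', conj]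
  · rw [swapDefect_of_ne z hk, smul_zero, add_zero]
    by_cases hk' : k = s i (ε.pivot i)
    · rw [hk', pivot, s_s_apply]
    · have fixed := s_apply_of_ne_pivot hk hk'
      rw [fixed, (other ε k fixed).eq]

theorem mul_pivot (h : Crosses ξ i z t) (ε : Colour) : t * z ε (ε.pivot i) =
    z ε (s i (ε.pivot i)) * t + ξ • (z ε (ε.pivot i) - z ε (s i (ε.pivot i))) := by
  rw [h, swapDefect_pivot]

theorem mul_swap_pivot (h : Crosses ξ i z t) (ε : Colour) :
    t * z ε (s i (ε.pivot i)) = z ε (ε.pivot i) * t := by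
  rw [h, swapDefect_of_ne z (s_pivot_ne ε i), smul_zero, add_zero, s_s_apply]

theorem commute (h : Crosses ξ i z t) (ε : Colour) {k : Fin n} (hk : s i k = k) :
    Commute t (z ε k) := by
  have hne : k ≠ ε.pivot i := fun e => s_pivot_ne ε i (e ▸ hk)
  rw [Commute, SemiconjBy, h, swapDefect_of_ne z hne, smul_zero, add_zero, hk]

theorem mem_iff (h : Crosses ξ i z t) (ht : t * t = ξ • t + 1) {S : Subalgebra F R} (hS : t ∈ S)
    (ε : Colour) (k : Fin n) : z ε (s i k) ∈ S ↔ z ε k ∈ S := by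
  have hinv : t - algebraMap F R ξ ∈ S := sub_mem hS (algebraMap_mem S ξ)
  have swap_pivot_iff : z ε (s i (ε.pivot i)) ∈ S ↔ z ε (ε.pivot i) ∈ S := by
    constructor <;> intro hz
    · rw [← mul_one (z ε (ε.pivot i)), ← mul_sub_algebraMap_of_sq ht, ← mul_assoc,
        ← h.mul_swap_pivot]
      exact mul_mem (mul_mem hS hz) hinv
    · rw [← one_mul (z ε (s i _)), ← sub_algebraMap_mul_of_sq ht, mul_assoc, h.mul_swap_pivot]
      exact mul_mem hinv (mul_mem hz hS)
  by_cases hk : k = ε.pivot i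
  · rw [hk, swap_pivot_iff]
  by_cases hk' : k = s i (ε.pivot i)
  · rw [hk', s_s_apply, swap_pivot_iff]
  · rw [s_apply_of_ne_pivot hk hk']

theorem quadratic_mul (h : Crosses ξ i z t) (ε : Colour) (k : Fin n) :
    (t * t - ξ • t - 1) * z ε k = z ε k * (t * t - ξ • t - 1) := by
  by_cases hk : k = ε.pivot i
  · rw [hk]
    simp only [sub_mul, mul_sub, mul_add, mul_assoc, h.mul_pivot, smul_mul_assoc, mul_smul_comm,
      one_mul, mul_one, smul_sub, smul_add]
    rw [← mul_assoc t, h.mul_swap_pivot, mul_assoc]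
    abel
  by_cases hk' : k = s i (ε.pivot i)
  · rw [hk']
    simp only [sub_mul, mul_sub, mul_assoc, h.mul_swap_pivot, smul_mul_assoc, mul_smul_comm,
      one_mul, mul_one]
    rw [← mul_assoc t, h.mul_pivot]
    simp only [sub_mul, add_mul, mul_assoc, smul_mul_assoc, smul_sub]
    abel
  · have comm := h.commute ε (s_apply_of_ne_pivot hk hk')
    exact ((comm.mul_left comm).sub_left (comm.smul_left ξ)).sub_left (Commute.one_left _)

theorem commutator_mul (h : Crosses ξ i z t) (h' : Crosses ξ j z u) (ε : Colour) {k : Fin n}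
    (hk : s j k = k) (hk' : s j (s i k) = s i k) :
    (t * u - u * t) * z ε k = z ε (s i k) * (t * u - u * t) := by
  have hdefect : Commute u (swapDefect z i ε k) := by
    unfold swapDefect
    split_ifs
    · exact (h'.commute ε hk).sub_right (h'.commute ε hk')
    · exact Commute.zero_right u
  rw [sub_mul, mul_sub, mul_assoc, mul_assoc, (h'.commute ε hk).eq, ← mul_assoc, h, mul_add,
    ← mul_assoc u, (h'.commute ε hk').eq, mul_smul_comm, hdefect.eq, add_mul, smul_mul_assoc,
    mul_assoc, mul_assoc, add_sub_add_right_eq_sub]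

end Crosses

end Crossing

section Adjacent

variable {n : ℕ} {i j : Fin (n - 1)}

theorem lo_eq_hi_of_adjacent (hij : j.val = i.val + 1) : lo j = hi i :=
  Fin.ext hij

theorem s_apply_hi_of_adjacent (hij : j.val = i.val + 1) : s i (hi j) = hi j :=
  s_apply_of_ne i (Fin.ne_of_gt (Nat.lt_succ_of_lt (Nat.lt_of_succ_le hij.ge)))
    (Fin.ne_of_gt (Nat.succ_lt_succ (Nat.lt_of_succ_le hij.ge)))

theorem s_apply_lo_of_adjacent (hij : j.val = i.val + 1) : s j (lo i) = lo i :=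
  s_apply_of_ne j (Fin.ne_of_lt (Nat.lt_of_succ_le hij.ge))
    (Fin.ne_of_lt (Nat.lt_succ_of_lt (Nat.lt_of_succ_le hij.ge)))

theorem isLeftDescent_s_mul_iff_of_adjacent (hij : j.val = i.val + 1) (w : Perm (Fin n)) :
    IsLeftDescent i (s j * w) ↔ w⁻¹ (hi j) < w⁻¹ (lo i) := by
  rw [IsLeftDescent, mul_inv_rev, Perm.mul_apply, Perm.mul_apply, s_inv,
    ← lo_eq_hi_of_adjacent hij, s_lo, s_apply_lo_of_adjacent hij]

theorem isLeftDescent_s_mul_comm_of_adjacent (hij : j.val = i.val + 1) (w : Perm (Fin n)) :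
    IsLeftDescent j (s i * w) ↔ IsLeftDescent i (s j * w) := by
  rw [isLeftDescent_s_mul_iff_of_adjacent hij, IsLeftDescent, mul_inv_rev, Perm.mul_apply,
    Perm.mul_apply, s_inv, lo_eq_hi_of_adjacent hij, s_hi, s_apply_hi_of_adjacent hij]

theorem s_braid (hij : j.val = i.val + 1) : s i * s j * s i = s j * s i * s j := by
  have hlo : lo i ≠ lo j := lo_eq_hi_of_adjacent hij ▸ lo_ne_hi i
  have hne : lo i ≠ hi j := fun e => lo_ne_hi i (by
    rw [← s_lo i, e, s_apply_hi_of_adjacent hij])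
  rw [s, s, ← lo_eq_hi_of_adjacent hij, Equiv.swap_mul_swap_mul_swap hlo hne,
    Equiv.swap_comm (lo i), Equiv.swap_comm (lo j) (hi j),
    Equiv.swap_mul_swap_mul_swap (lo_ne_hi j).symm hne.symm, Equiv.swap_comm]

theorem s_apply_of_far (hij : i.val + 1 < j.val) {k : Fin n} (hk : s j k ≠ k) : s i k = k := by
  simp only [ne_eq, Fin.ext_iff, s_apply_val] at hk ⊢
  split_ifs at hk ⊢ <;> omega

theorem s_commute_of_far (hij : i.val + 1 < j.val) : s i * s j = s j * s i := by
  refine Equiv.ext fun k => ?_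
  simp only [Perm.mul_apply, Fin.ext_iff, s_apply_val]
  split_ifs <;> omega

theorem isLeftDescent_s_mul_iff_of_far (hij : i.val + 1 < j.val) (w : Perm (Fin n)) :
    (IsLeftDescent i (s j * w) ↔ IsLeftDescent i w) ∧
      (IsLeftDescent j (s i * w) ↔ IsLeftDescent j w) := by
  simp only [IsLeftDescent, mul_inv_rev, Perm.mul_apply, s_inv]
  constructor <;> rw [s_apply_of_ne, s_apply_of_ne] <;>
    simp only [ne_eq, Fin.ext_iff, lo, hi] <;> omega

end Adjacent

section Idealizer

variable (F : Type*) {R : Type*} [Field F] [Ring R] [Algebra F R]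

/-- The idealizer of the left ideal `R Q`: the elements `a` with `Q a ∈ R Q`. -/
def idealizer (Q : R) : Subalgebra F R where
  carrier := {a | ∃ b, Q * a = b * Q}
  mul_mem' := by
    rintro a a' ⟨b, h⟩ ⟨b', h'⟩
    exact ⟨b * b', by rw [← mul_assoc, h, mul_assoc, h', mul_assoc]⟩
  add_mem' := by
    rintro a a' ⟨b, h⟩ ⟨b', h'⟩
    exact ⟨b + b', by rw [mul_add, h, h', add_mul]⟩
  algebraMap_mem' r := ⟨algebraMap F R r, (Algebra.commutes r Q).symm⟩

variable {F}

theorem mem_idealizer_neg {Q a : R} : a ∈ idealizer F (-Q) ↔ a ∈ idealizer F Q := by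
  simp only [idealizer, Subalgebra.mem_mk, Subsemiring.mem_mk, Submonoid.mem_mk,
    Subsemigroup.mem_mk, Set.mem_ofPred_eq, neg_mul, mul_neg, neg_inj]

theorem mem_idealizer_of_commute {Q a : R} (h : Commute Q a) : a ∈ idealizer F Q :=
  ⟨a, h.eq⟩

theorem braid_mem_idealizer_left {ξ : F} {t u : R} (ht : t * t = ξ • t + 1)
    (hu : u * u = ξ • u + 1) : t ∈ idealizer F (t * u * t - u * t * u) := by
  refine ⟨algebraMap F R ξ - u, ?_⟩
  rw [sub_mul (algebraMap F R ξ), ← Algebra.smul_def]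
  simp only [sub_mul, mul_sub, smul_sub, ← mul_assoc, hu]
  simp only [mul_assoc, ht, mul_add, add_mul, mul_smul_comm, smul_mul_assoc, mul_one, one_mul]
  abel

theorem braid_mem_idealizer_right {ξ : F} {t u : R} (ht : t * t = ξ • t + 1)
    (hu : u * u = ξ • u + 1) : u ∈ idealizer F (t * u * t - u * t * u) := by
  rw [← mem_idealizer_neg, neg_sub]
  exact braid_mem_idealizer_left hu ht

theorem braid_mul_of_mul_eq {t u a b c : R} (htab : t * a = b * t) (hubc : u * b = c * u)
    (hua : Commute u a) (htc : Commute t c) :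
    (t * u * t - u * t * u) * a = c * (t * u * t - u * t * u) := by
  have htut : t * u * t * a = c * (t * u * t) := by
    rw [mul_assoc, htab, ← mul_assoc, mul_assoc t, hubc, ← mul_assoc, htc.eq]
    simp only [mul_assoc]
  have hutu : u * t * u * a = c * (u * t * u) := by
    rw [mul_assoc, hua.eq, ← mul_assoc, mul_assoc u, htab, ← mul_assoc, hubc]
    simp only [mul_assoc]
  rw [sub_mul, mul_sub, htut, hutu]

end Idealizer

namespace Crosses

variable {F R : Type*} [Field F] [Ring R] [Algebra F R] {n : ℕ} {ξ : F} {t u : R}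
  {z : Colour → Fin n → R} {i j : Fin (n - 1)}

theorem mem_idealizer_commutator (h : Crosses ξ i z t) (h' : Crosses ξ j z u)
    (hij : i.val + 1 < j.val) (ε : Colour) (k : Fin n) :
    z ε k ∈ idealizer F (t * u - u * t) := by
  have hcomm : s j (s i k) = s i (s j k) := by
    rw [← Perm.mul_apply, ← Perm.mul_apply, s_commute_of_far hij]
  by_cases hk : s j k = k
  · exact ⟨_, h.commutator_mul h' ε hk (by rw [hcomm, hk])⟩
  · have hik := s_apply_of_far hij hk
    rw [← mem_idealizer_neg, neg_sub]
    exact ⟨_, h'.commutator_mul h ε hik (by rw [← hcomm, hik])⟩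

theorem mem_idealizer_braid (h : Crosses ξ i z t) (h' : Crosses ξ j z u)
    (ht : t * t = ξ • t + 1) (hu : u * u = ξ • u + 1) (hij : j.val = i.val + 1)
    (ε : Colour) (k : Fin n) : z ε k ∈ idealizer F (t * u * t - u * t * u) := by
  have mem_s_i := h.mem_iff ht (braid_mem_idealizer_left ht hu) ε
  have mem_s_j := h'.mem_iff hu (braid_mem_idealizer_right ht hu) ε
  have hlo := lo_eq_hi_of_adjacent hij
  have commute_hi := h.commute ε (s_apply_hi_of_adjacent hij)
  have commute_lo := h'.commute ε (s_apply_lo_of_adjacent hij)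
  have mem_lo : z ε (lo i) ∈ idealizer F (t * u * t - u * t * u) := by
    cases ε
    · exact ⟨_, braid_mul_of_mul_eq (by simpa [Colour.pivot] using h.mul_swap_pivot .c)
        (by simpa [Colour.pivot, hlo] using h'.mul_swap_pivot .c) commute_lo commute_hi⟩
    · rw [← s_hi, mem_s_i, ← hlo, ← s_hi, mem_s_j, ← mem_idealizer_neg, neg_sub]
      exact ⟨_, braid_mul_of_mul_eq (by simpa [Colour.pivot] using h'.mul_swap_pivot .y)
        (by simpa [Colour.pivot, hlo] using h.mul_swap_pivot .y) commute_hi commute_lo⟩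
  have mem_mid : z ε (hi i) ∈ idealizer F (t * u * t - u * t * u) := by
    rwa [← s_lo, mem_s_i]
  rcases eq_or_ne k (lo i) with rfl | hk_lo
  · exact mem_lo
  rcases eq_or_ne k (hi i) with rfl | hk_mid
  · exact mem_mid
  rcases eq_or_ne k (hi j) with rfl | hk_hi
  · rwa [← s_lo, mem_s_j, hlo]
  have commute_t := h.commute ε (s_apply_of_ne i hk_lo hk_mid)
  have commute_u := h'.commute ε (s_apply_of_ne j (hlo ▸ hk_mid) hk_hi)
  exact mem_idealizer_of_commute (((commute_t.mul_left commute_u).mul_left commute_t).sub_left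
    ((commute_u.mul_left commute_t).mul_left commute_u))

end Crosses

section RegularRepresentation

open PolyClifford

variable {F : Type*} [Field F] {n : ℕ}

open Classical in
/-- The coefficient of `T_w` in `T_i T_w`. -/
noncomputable def descentCoeff (ξ : F) (i : Fin (n - 1)) (w : Perm (Fin n)) : F :=
  if IsLeftDescent i w then ξ else 0

theorem descentCoeff_of_not {ξ : F} {i : Fin (n - 1)} {w : Perm (Fin n)}
    (h : ¬IsLeftDescent i w) : descentCoeff ξ i w = 0 :=
  if_neg h

theorem descentCoeff_s_mul (ξ : F) (i : Fin (n - 1)) (w : Perm (Fin n)) :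
    descentCoeff ξ i (s i * w) + descentCoeff ξ i w = ξ := by
  by_cases h : IsLeftDescent i w <;> simp [descentCoeff, isLeftDescent_s_mul_iff, h]

theorem descentCoeff_congr {ξ : F} {i j : Fin (n - 1)} {w v : Perm (Fin n)}
    (h : IsLeftDescent i w ↔ IsLeftDescent j v) : descentCoeff ξ i w = descentCoeff ξ j v := by
  simp only [descentCoeff, h]

/-- The model of the regular representation of `H_n`: `v` stands for `∑ v w * T_w`. -/
abbrev PBWModule (F : Type*) [Field F] (n : ℕ) : Type _ := Perm (Fin n) → PolyClifford F n

/-- The basis vector that stands for `T_w`. -/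
noncomputable def delta (F : Type*) [Field F] (w : Perm (Fin n)) : PBWModule F n := Pi.single w 1

theorem delta_apply (w v : Perm (Fin n)) : delta F w v = if v = w then 1 else 0 :=
  Pi.single_apply w 1 v

/-- Left multiplication by the generator `z ε k` on the model. -/
noncomputable def opZ (F : Type*) [Field F] (ε : Colour) (k : Fin n) :
    Module.End F (PBWModule F n) :=
  Algebra.lsmul F F (PBWModule F n) (cliffordGen F ε k)

/-- Left multiplication by `T_i` on the model. -/
noncomputable def opT (ξ : F) (i : Fin (n - 1)) : Module.End F (PBWModule F n) :=
  LinearMap.pi fun w => skewDer ξ i ∘ₗ LinearMap.proj w + (perm (s i)).toLinearMap ∘ₗ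
    (LinearMap.proj (s i * w) + descentCoeff ξ i w • LinearMap.proj w)

/-- Right multiplication by `T_j` on the model. -/
noncomputable def opR (ξ : F) (j : Fin (n - 1)) : Module.End F (PBWModule F n) :=
  LinearMap.pi fun w => LinearMap.proj (w * s j) + descentCoeff ξ j w⁻¹ • LinearMap.proj w

theorem opT_apply (ξ : F) (i : Fin (n - 1)) (v : PBWModule F n) (w : Perm (Fin n)) :
    opT ξ i v w = skewDer ξ i (v w) + perm (s i) (v (s i * w) + descentCoeff ξ i w • v w) :=
  rfl

theorem opR_apply (ξ : F) (j : Fin (n - 1)) (v : PBWModule F n) (w : Perm (Fin n)) :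
    opR ξ j v w = v (w * s j) + descentCoeff ξ j w⁻¹ • v w :=
  rfl

theorem isCliffordFamily_opZ : IsCliffordFamily (opZ F (n := n)) :=
  (isCliffordFamily_cliffordGen F).map (Algebra.lsmul F F (PBWModule F n))

theorem opT_smul (ξ : F) (i : Fin (n - 1)) (a : PolyClifford F n) (v : PBWModule F n) :
    opT ξ i (a • v) = perm (s i) a • opT ξ i v + skewDer ξ i a • v := by
  refine funext fun w => ?_
  simp only [opT_apply, Pi.smul_apply, Pi.add_apply, smul_eq_mul, skewDer_mul, map_add, map_smul,
    map_mul, mul_add, mul_smul_comm]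
  abel

theorem crosses_opT (ξ : F) (i : Fin (n - 1)) : Crosses ξ i (opZ F) (opT ξ i) := by
  intro ε k
  refine LinearMap.ext fun v => ?_
  change opT ξ i (cliffordGen F ε k • v) = _
  rw [opT_smul, perm_cliffordGen, skewDer_cliffordGen, smul_assoc]
  exact congrArg (_ + ξ • ·) (LinearMap.congr_fun
    (map_swapDefect (Algebra.lsmul F F (PBWModule F n)) (cliffordGen F) i ε k) v)

theorem opR_smul (ξ : F) (j : Fin (n - 1)) (a : PolyClifford F n) (v : PBWModule F n) :
    opR ξ j (a • v) = a • opR ξ j v := by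
  refine funext fun w => ?_
  simp only [opR_apply, Pi.smul_apply, smul_eq_mul, mul_add, mul_smul_comm]

theorem commute_opR_opT (ξ : F) (i j : Fin (n - 1)) :
    Commute (opR ξ j) (opT (n := n) ξ i) := by
  refine LinearMap.ext fun v => funext fun w => ?_
  have balance : descentCoeff ξ i (w * s j) • v (w * s j) + descentCoeff ξ j w⁻¹ • v (s i * w) =
      descentCoeff ξ j (s i * w)⁻¹ • v (s i * w) + descentCoeff ξ i w • v (w * s j) := by
    by_cases h : s i * w = w * s j
    · have hcomm : s i * (s i * w) = s i * w * s j := by rw [mul_assoc, ← h]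
      rw [descentCoeff_congr (isLeftDescent_inv_iff_of_s_mul_eq h),
        descentCoeff_congr (isLeftDescent_inv_iff_of_s_mul_eq hcomm), h]
    · rw [descentCoeff_congr (isLeftDescent_inv_s_mul_iff h),
        descentCoeff_congr (isLeftDescent_mul_s_iff h), add_comm]
  replace balance := congrArg (perm (s i)) balance
  simp only [map_add, map_smul] at balance
  simp only [Module.End.mul_apply, opR_apply, opT_apply, map_add, map_smul, smul_add, mul_assoc]
  rw [smul_comm (descentCoeff ξ i w), ← sub_eq_zero, ← sub_eq_zero.2 balance]
  abel

theorem delta_s_mul (i : Fin (n - 1)) (w v : Perm (Fin n)) :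
    delta F w (s i * v) = delta F (s i * w) v := by
  simp only [delta_apply, ← inv_mul_eq_iff_eq_mul, s_inv]

theorem delta_mul_s (j : Fin (n - 1)) (w v : Perm (Fin n)) :
    delta F w (v * s j) = delta F (w * s j) v := by
  simp only [delta_apply, ← mul_inv_eq_iff_eq_mul, s_inv]

theorem opT_delta (ξ : F) (i : Fin (n - 1)) (w : Perm (Fin n)) :
    opT ξ i (delta F w) = delta F (s i * w) + descentCoeff ξ i w • delta F w := by
  refine funext fun v => ?_
  rw [opT_apply, delta_s_mul, Pi.add_apply, Pi.smul_apply, map_add, map_smul, delta_apply,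
    delta_apply]
  rcases eq_or_ne v w with rfl | hvw
  · rw [if_pos rfl, skewDer_one, zero_add, map_one]
    split_ifs <;> simp only [map_one, map_zero]
  · rw [if_neg hvw, map_zero, map_zero, smul_zero, smul_zero, zero_add]
    split_ifs <;> simp only [map_one, map_zero]

theorem opR_delta (ξ : F) (j : Fin (n - 1)) (w : Perm (Fin n)) :
    opR ξ j (delta F w) = delta F (w * s j) + descentCoeff ξ j w⁻¹ • delta F w := by
  refine funext fun v => ?_
  rw [opR_apply, delta_mul_s, Pi.add_apply, Pi.smul_apply, delta_apply w]
  rcases eq_or_ne v w with rfl | hvw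
  · rfl
  · rw [if_neg hvw, smul_zero, smul_zero]

theorem opT_delta_of_not_isLeftDescent (ξ : F) {i : Fin (n - 1)} {w : Perm (Fin n)}
    (h : ¬IsLeftDescent i w) : opT ξ i (delta F w) = delta F (s i * w) := by
  rw [opT_delta, descentCoeff_of_not h, zero_smul, add_zero]

theorem opR_delta_of_not_isLeftDescent (ξ : F) {j : Fin (n - 1)} {w : Perm (Fin n)}
    (h : ¬IsLeftDescent j w⁻¹) : opR ξ j (delta F w) = delta F (w * s j) := by
  rw [opR_delta, descentCoeff_of_not h, zero_smul, add_zero]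

theorem smul_delta_eq_single (a : PolyClifford F n) (w : Perm (Fin n)) :
    a • delta F w = Pi.single w a := by
  rw [delta, ← Pi.single_smul, smul_eq_mul, mul_one]

theorem lsmul_mem_of_opZ_mem {S : Subalgebra F (Module.End F (PBWModule F n))}
    (hS : ∀ ε k, opZ F ε k ∈ S) (a : PolyClifford F n) :
    Algebra.lsmul F F (PBWModule F n) a ∈ S := by
  induction a using PolyClifford.induction with
  | gen ε k => exact hS ε k
  | algebraMap r =>
    rw [AlgHom.commutes]
    exact algebraMap_mem S r
  | add a b ha hb =>
    rw [map_add]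
    exact add_mem ha hb
  | mul a b ha hb =>
    rw [map_mul]
    exact mul_mem ha hb

theorem eq_zero_of_apply_delta_one {ξ : F} {Q : Module.End F (PBWModule F n)}
    (hR : ∀ j, Commute (opR ξ j) Q) (hZ : ∀ ε k, opZ F ε k ∈ idealizer F Q)
    (hone : Q (delta F 1) = 0) : Q = 0 := by
  have on_delta (w : Perm (Fin n)) : Q (delta F w) = 0 := by
    rw [← inv_inv w]
    induction w⁻¹ using perm_induction_left with
    | one => rwa [inv_one]
    | step j w hw ih =>
      rw [mul_inv_rev, s_inv, ← opR_delta_of_not_isLeftDescent ξ (by rwa [inv_inv]),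
        ← Module.End.mul_apply, ← (hR j).eq, Module.End.mul_apply, ih, map_zero]
  refine LinearMap.pi_ext fun w a => ?_
  obtain ⟨b, hb⟩ := lsmul_mem_of_opZ_mem hZ a
  have := LinearMap.congr_fun hb (delta F w)
  rw [← smul_delta_eq_single]
  exact this.trans (by rw [Module.End.mul_apply, on_delta, map_zero]; rfl)

theorem opT_sq (ξ : F) (i : Fin (n - 1)) :
    opT ξ i * opT ξ i = ξ • opT (n := n) ξ i + 1 := by
  rw [← sub_eq_zero, ← sub_sub]
  have hR (j) : Commute (opR ξ j) (opT (n := n) ξ i) := commute_opR_opT ξ i j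
  refine eq_zero_of_apply_delta_one (ξ := ξ)
    (fun j => (((hR j).mul_right (hR j)).sub_right ((hR j).smul_right ξ)).sub_right
      (Commute.one_right _))
    (fun ε k => ⟨_, (crosses_opT ξ i).quadratic_mul ε k⟩) ?_
  have hcoeff : descentCoeff ξ i (s i * 1 : Perm (Fin n)) = ξ := by
    simpa only [descentCoeff_of_not (not_isLeftDescent_one i), add_zero] using
      descentCoeff_s_mul ξ i (1 : Perm (Fin n))
  simp only [LinearMap.sub_apply, LinearMap.smul_apply, Module.End.mul_apply, Module.End.one_apply,
    opT_delta_of_not_isLeftDescent ξ (not_isLeftDescent_one i), opT_delta, hcoeff, s_mul_s_mul]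
  abel

theorem opT_far (ξ : F) {i j : Fin (n - 1)} (hij : i.val + 1 < j.val) :
    opT ξ i * opT ξ j = opT ξ j * opT (n := n) ξ i := by
  rw [← sub_eq_zero]
  have hR (k l) : Commute (opR ξ k) (opT (n := n) ξ l) := commute_opR_opT ξ l k
  refine eq_zero_of_apply_delta_one (ξ := ξ)
    (fun k => ((hR k i).mul_right (hR k j)).sub_right ((hR k j).mul_right (hR k i)))
    ((crosses_opT ξ i).mem_idealizer_commutator (crosses_opT ξ j) hij) ?_
  have not_descent := isLeftDescent_s_mul_iff_of_far hij (1 : Perm (Fin n))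
  rw [LinearMap.sub_apply, Module.End.mul_apply, Module.End.mul_apply,
    opT_delta_of_not_isLeftDescent ξ (not_isLeftDescent_one j),
    opT_delta_of_not_isLeftDescent ξ (not_isLeftDescent_one i),
    opT_delta_of_not_isLeftDescent ξ (not_descent.1.not.2 (not_isLeftDescent_one i)),
    opT_delta_of_not_isLeftDescent ξ (not_descent.2.not.2 (not_isLeftDescent_one j)),
    mul_one, mul_one, s_commute_of_far hij, sub_self]

theorem opT_braid (ξ : F) {i j : Fin (n - 1)} (hij : j.val = i.val + 1) :
    opT ξ i * opT ξ j * opT ξ i = opT ξ j * opT ξ i * opT (n := n) ξ j := by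
  rw [← sub_eq_zero]
  have hR (k l) : Commute (opR ξ k) (opT (n := n) ξ l) := commute_opR_opT ξ l k
  refine eq_zero_of_apply_delta_one (ξ := ξ)
    (fun k => (((hR k i).mul_right (hR k j)).mul_right (hR k i)).sub_right
      (((hR k j).mul_right (hR k i)).mul_right (hR k j)))
    ((crosses_opT ξ i).mem_idealizer_braid (crosses_opT ξ j) (opT_sq ξ i) (opT_sq ξ j) hij) ?_
  have descent_comm (w : Perm (Fin n)) := isLeftDescent_s_mul_comm_of_adjacent hij w
  have hi_one : ¬IsLeftDescent i (s j * 1 : Perm (Fin n)) := by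
    rw [isLeftDescent_s_mul_iff_of_adjacent hij, inv_one, not_lt]
    exact ((lo_lt_hi i).trans (lo_eq_hi_of_adjacent hij ▸ lo_lt_hi j)).le
  have descents := not_isLeftDescent_one (n := n)
  rw [LinearMap.sub_apply, Module.End.mul_apply, Module.End.mul_apply, Module.End.mul_apply,
    Module.End.mul_apply,
    opT_delta_of_not_isLeftDescent ξ (descents i), opT_delta_of_not_isLeftDescent ξ (descents j),
    opT_delta_of_not_isLeftDescent ξ hi_one,
    opT_delta_of_not_isLeftDescent ξ ((descent_comm 1).not.2 hi_one),
    opT_delta_of_not_isLeftDescent ξ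
      ((descent_comm _).not.1 (by rw [s_mul_s_mul]; exact descents j)),
    opT_delta_of_not_isLeftDescent ξ
      ((descent_comm _).not.2 (by rw [s_mul_s_mul]; exact descents i)),
    ← mul_assoc, ← mul_assoc, ← mul_assoc, ← mul_assoc, s_braid hij, sub_self]

end RegularRepresentation

section HeckeClifford

variable {F : Type*} [Field F] {n : ℕ}

/-- The defining relations of the affine Hecke–Clifford superalgebra in terms of the symmetric
generators, with an arbitrary `ξ` in place of `q - q⁻¹`. -/
structure IsHeckeClifford {R : Type*} [Ring R] [Algebra F R] (ξ : F) (z : Colour → Fin n → R)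
    (t : Fin (n - 1) → R) : Prop where
  clifford : IsCliffordFamily z
  crosses (i : Fin (n - 1)) : Crosses ξ i z (t i)
  sq (i : Fin (n - 1)) : t i * t i = ξ • t i + 1
  braid {i j : Fin (n - 1)} : j.val = i.val + 1 → t i * t j * t i = t j * t i * t j
  far {i j : Fin (n - 1)} : i.val + 1 < j.val → t i * t j = t j * t i

theorem isHeckeClifford_op (ξ : F) : IsHeckeClifford ξ (opZ F (n := n)) (opT ξ) where
  clifford := isCliffordFamily_opZ
  crosses := crosses_opT ξ
  sq := opT_sq ξ
  braid := opT_braid ξ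
  far := opT_far ξ

theorem IsCliffordFamily.commute_mul {B : Type*} [Ring B] {z : Colour → Fin n → B}
    (h : IsCliffordFamily z) (ε ε' δ : Colour) {k l : Fin n} (hkl : k ≠ l) :
    Commute (z ε k * z ε' k) (z δ l) := by
  rw [Commute, SemiconjBy, mul_assoc, h.anti ε' δ hkl, mul_neg, ← mul_assoc, h.anti ε δ hkl,
    neg_mul, neg_neg, mul_assoc]

theorem IsCliffordFamily.commute_mul_mul {B : Type*} [Ring B] {z : Colour → Fin n → B}
    (h : IsCliffordFamily z) (ε ε' δ δ' : Colour) {k l : Fin n} (hkl : k ≠ l) :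
    Commute (z ε k * z ε' k) (z δ l * z δ' l) :=
  (h.commute_mul ε ε' δ hkl).mul_right (h.commute_mul ε ε' δ' hkl)

/-- The symmetric generators `c` and `y = c x` attached to the Clifford generators `c` and the
commuting generators `x`. -/
def symmetricGen {R : Type*} [Mul R] (c x : Fin n → R) : Colour → Fin n → R
  | .c, k => c k
  | .y, k => c k * x k

theorem isCliffordFamily_symmetricGen {R : Type*} [Ring R] {c x x' : Fin n → R}
    (c_sq : ∀ k, c k * c k = 1) (c_anti : ∀ k l, k ≠ l → c k * c l = -(c l * c k))
    (x'_mul_x : ∀ k, x' k * x k = 1) (c_mul_x : ∀ k, c k * x k = x' k * c k)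
    (c_comm : ∀ k l, k ≠ l → Commute (c k) (x l)) (x_comm : ∀ k l, Commute (x k) (x l)) :
    IsCliffordFamily (symmetricGen c x) where
  sq
    | .c, k => c_sq k
    | .y, k => by
      rw [symmetricGen, c_mul_x, mul_assoc, ← c_mul_x, ← mul_assoc (c k), c_sq, one_mul, x'_mul_x]
  anti ε δ k l hkl := by
    have c_anti_gen : c k * symmetricGen c x δ l = -(symmetricGen c x δ l * c k) := by
      cases δ
      · exact c_anti k l hkl
      · rw [symmetricGen, ← mul_assoc, c_anti k l hkl, neg_mul, mul_assoc, (c_comm k l hkl).eq,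
          mul_assoc]
    have x_comm_gen : Commute (x k) (symmetricGen c x δ l) := by
      cases δ
      · exact (c_comm l k hkl.symm).symm
      · exact (c_comm l k hkl.symm).symm.mul_right (x_comm k l)
    cases ε
    · exact c_anti_gen
    · change c k * x k * _ = -(_ * (c k * x k))
      rw [mul_assoc, x_comm_gen.eq, ← mul_assoc, c_anti_gen, neg_mul, mul_assoc]

theorem mul_mul_eq_of_affine_cross {R : Type*} [Ring R] [Algebra F R] {ξ : F} {c c' x x' t : R}
    (c_sq : c' * c' = 1) (c_anti : c * c' = -(c' * c)) (t_sq : t * t = ξ • t + 1)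
    (t_mul_c : t * c = c' * t) (cross : (t + ξ • (c * c')) * x * t = x') :
    t * (c' * x') = c * x * t := by
  have t_c_t : t * c' * t = ξ • (c' * t) + c := by
    rw [mul_assoc, ← t_mul_c, ← mul_assoc, t_sq, add_mul, one_mul, smul_mul_assoc]
  have c_c_c : c' * (c * c') = -c := by
    rw [c_anti, mul_neg, ← mul_assoc, c_sq, one_mul]
  have absorb : t * c' * (t + ξ • (c * c')) = c := by
    rw [mul_add, t_c_t, mul_smul_comm, mul_assoc, c_c_c, mul_neg, t_mul_c, smul_neg]
    abel
  rw [← cross, ← mul_assoc, ← mul_assoc, ← mul_assoc, absorb]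

namespace IsHeckeClifford

variable {R : Type*} [Ring R] [Algebra F R] {ξ : F} {z : Colour → Fin n → R}
  {t : Fin (n - 1) → R}

theorem affine_cross (h : IsHeckeClifford ξ z t) (i : Fin (n - 1)) :
    (t i + ξ • (z .c (lo i) * z .c (hi i))) * (z .c (lo i) * z .y (lo i)) * t i =
      z .c (hi i) * z .y (hi i) := by
  have t_c : t i * z .c (lo i) = z .c (hi i) * t i := by
    simpa only [Colour.pivot, s_hi] using (h.crosses i).mul_swap_pivot .c
  have t_y : t i * z .y (lo i) = z .y (hi i) * t i + ξ • (z .y (lo i) - z .y (hi i)) := by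
    simpa only [Colour.pivot, s_lo] using (h.crosses i).mul_pivot .y
  have t_y_t : t i * z .y (lo i) * t i = z .y (hi i) + ξ • (z .y (lo i) * t i) := by
    rw [t_y, add_mul, mul_assoc, h.sq, mul_add, mul_one, smul_mul_assoc, sub_mul, smul_sub,
      mul_smul_comm]
    abel
  have c_c_c : z .c (lo i) * z .c (hi i) * z .c (lo i) = -z .c (hi i) := by
    rw [h.clifford.anti .c .c (lo_ne_hi i), neg_mul, mul_assoc, h.clifford.sq, mul_one]
  rw [add_mul, add_mul, ← mul_assoc, t_c, mul_assoc _ (t i), mul_assoc _ (t i * _), t_y_t, mul_add,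
    smul_mul_assoc, ← mul_assoc _ (z .c (lo i)), c_c_c, mul_smul_comm, smul_mul_assoc, neg_mul,
    neg_mul, mul_assoc, smul_neg, add_neg_cancel_right]

end IsHeckeClifford

end HeckeClifford

section Presentation

variable {F : Type} [Field F] {n : ℕ} {q : F}

/-- `H_n` is universal among the algebras with generators satisfying these relations; the image of
`X_k` is forced to be `C_k (C_k X_k)`. -/
noncomputable def IsHeckeClifford.lift {R : Type*} [Ring R] [Algebra F R] {z : Colour → Fin n → R}
    {t : Fin (n - 1) → R} (h : IsHeckeClifford (q - q⁻¹) z t) : H F q n →ₐ[F] R :=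
  RingQuot.liftAlgHom F ⟨FreeAlgebra.lift F fun
      | .X k => z .c k * z .y k
      | .Xinv k => z .y k * z .c k
      | .C k => z .c k
      | .T i => t i, fun a b hab => by
    have cancel (ε δ k) : z ε k * (z δ k * (z δ k * z ε k)) = 1 := by
      rw [← mul_assoc (z δ k), h.clifford.sq, one_mul, h.clifford.sq]
    have commute_even := h.clifford.commute_mul_mul
    have commute_T (ε) {i : Fin (n - 1)} {k : Fin n} (hlo : k ≠ lo i) (hhi : k ≠ hi i) :=
      (h.crosses i).commute ε (s_apply_of_ne i hlo hhi)
    cases hab <;> simp only [fx, fxinv, fc, ft, map_mul, map_add, map_smul, map_neg, map_one,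
      FreeAlgebra.lift_ι_apply]
    case XXinv k => rw [mul_assoc, cancel]
    case XinvX k => rw [mul_assoc, cancel]
    case XX k l =>
      obtain rfl | hkl := eq_or_ne k l
      exacts [rfl, commute_even .c .y .c .y hkl]
    case XiXi k l =>
      obtain rfl | hkl := eq_or_ne k l
      exacts [rfl, commute_even .y .c .y .c hkl]
    case XXi k l hkl => exact commute_even .c .y .y .c hkl
    case CC k => exact h.clifford.sq .c k
    case Canti k l hkl => exact h.clifford.anti .c .c hkl
    case CX k => rw [← mul_assoc, mul_assoc (z .y k), h.clifford.sq, one_mul, mul_one]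
    case CXi k => rw [mul_assoc]
    case CXo k l hkl => exact (h.clifford.commute_mul .c .y .c hkl.symm).symm
    case CXio k l hkl => exact (h.clifford.commute_mul .y .c .c hkl.symm).symm
    case Tquad i => exact h.sq i
    case Tbraid i j hij => exact h.braid hij
    case TTfar i j hij => exact h.far hij
    case TC i => simpa only [Colour.pivot, s_hi] using (h.crosses i).mul_swap_pivot .c
    case TCo i k hlo hhi => exact commute_T .c hlo hhi
    case TXo i k hlo hhi => exact (commute_T .c hlo hhi).mul_right (commute_T .y hlo hhi)
    case TXio i k hlo hhi => exact (commute_T .y hlo hhi).mul_right (commute_T .c hlo hhi)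
    case cross i => exact h.affine_cross i⟩

/-- The symmetric generators `C_k` and `C_k X_k` of the affine Hecke–Clifford superalgebra. -/
noncomputable abbrev heckeGen (q : F) : Colour → Fin n → H F q n :=
  symmetricGen (C F q) (X F q)

theorem C_mul_self (k : Fin n) : C F q k * C F q k = 1 := by
  simpa only [C, map_mul, map_one] using RingQuot.mkAlgHom_rel F (Rel.CC (q := q) k)

theorem C_mul_X (k : Fin n) : C F q k * X F q k = Xinv F q k * C F q k := by
  simpa only [C, X, Xinv, map_mul] using RingQuot.mkAlgHom_rel F (Rel.CX (q := q) k)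

theorem C_mul_C_of_ne {k l : Fin n} (hkl : k ≠ l) : C F q k * C F q l = -(C F q l * C F q k) := by
  simpa only [C, map_mul, map_neg] using RingQuot.mkAlgHom_rel F (Rel.Canti (q := q) k l hkl)

theorem T_mul_self (i : Fin (n - 1)) : T F q i * T F q i = (q - q⁻¹) • T F q i + 1 := by
  simpa only [T, map_mul, map_one, map_add, map_smul] using
    RingQuot.mkAlgHom_rel F (Rel.Tquad (q := q) i)

theorem T_mul_C_lo (i : Fin (n - 1)) : T F q i * C F q (lo i) = C F q (hi i) * T F q i := by
  simpa only [T, C, map_mul] using RingQuot.mkAlgHom_rel F (Rel.TC (q := q) i)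

theorem heckeGen_c_mul_y (k : Fin n) : heckeGen q .c k * heckeGen q .y k = X F q k := by
  change C F q k * (C F q k * X F q k) = _
  rw [← mul_assoc, C_mul_self, one_mul]

theorem heckeGen_y_mul_c (k : Fin n) : heckeGen q .y k * heckeGen q .c k = Xinv F q k := by
  change C F q k * X F q k * C F q k = _
  rw [C_mul_X, mul_assoc, C_mul_self, mul_one]

theorem isCliffordFamily_heckeGen : IsCliffordFamily (heckeGen q (n := n)) :=
  isCliffordFamily_symmetricGen (x' := Xinv F q) C_mul_self (fun _ _ => C_mul_C_of_ne)
    (fun k => by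
      simpa only [X, Xinv, map_mul, map_one] using RingQuot.mkAlgHom_rel F (Rel.XinvX (q := q) k))
    C_mul_X
    (fun k l hkl => by
      simpa only [C, X, map_mul] using! RingQuot.mkAlgHom_rel F (Rel.CXo (q := q) k l hkl))
    fun k l => by
      simpa only [X, map_mul] using! RingQuot.mkAlgHom_rel F (Rel.XX (q := q) k l)

theorem T_mul_heckeGen_y_hi (i : Fin (n - 1)) :
    T F q i * heckeGen q .y (hi i) = heckeGen q .y (lo i) * T F q i :=
  mul_mul_eq_of_affine_cross (C_mul_self _) (C_mul_C_of_ne (lo_ne_hi i)) (T_mul_self i)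
    (T_mul_C_lo i) <| by
      simpa only [X, C, T, map_mul, map_add, map_smul] using
        RingQuot.mkAlgHom_rel F (Rel.cross (q := q) i)

theorem crosses_T (i : Fin (n - 1)) : Crosses (q - q⁻¹) i (heckeGen q) (T F q i) := by
  refine .of_generators (T_mul_self i) (fun ε => ?_) fun ε k hk => ?_
  · cases ε
    · simpa only [Colour.pivot, s_lo, s_hi] using! T_mul_C_lo i
    · simpa only [Colour.pivot, s_lo] using T_mul_heckeGen_y_hi i
  · have hlo : k ≠ lo i := fun e => (lo_ne_hi i).symm (by rwa [e, s_lo] at hk)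
    have hhi : k ≠ hi i := fun e => lo_ne_hi i (by rwa [e, s_hi] at hk)
    have T_C : Commute (T F q i) (C F q k) := by
      simpa only [T, C, map_mul] using! RingQuot.mkAlgHom_rel F (Rel.TCo (q := q) i k hlo hhi)
    have T_X : Commute (T F q i) (X F q k) := by
      simpa only [T, X, map_mul] using! RingQuot.mkAlgHom_rel F (Rel.TXo (q := q) i k hlo hhi)
    cases ε
    · exact T_C
    · exact T_C.mul_right T_X

theorem isHeckeClifford_H : IsHeckeClifford (q - q⁻¹) (heckeGen q) (T F q (n := n)) where
  clifford := isCliffordFamily_heckeGen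
  crosses := crosses_T
  sq := T_mul_self
  braid {i j} hij := by
    simpa only [T, map_mul] using RingQuot.mkAlgHom_rel F (Rel.Tbraid (q := q) i j hij)
  far {i j} hij := by
    simpa only [T, map_mul] using RingQuot.mkAlgHom_rel F (Rel.TTfar (q := q) i j hij)

namespace IsHeckeClifford

variable {R : Type*} [Ring R] [Algebra F R] {z : Colour → Fin n → R} {t : Fin (n - 1) → R}

theorem lift_T (h : IsHeckeClifford (q - q⁻¹) z t) (i : Fin (n - 1)) :
    h.lift (T F q i) = t i :=
  (RingQuot.liftAlgHom_mkAlgHom_apply ..).trans (FreeAlgebra.lift_ι_apply ..)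

theorem lift_heckeGen (h : IsHeckeClifford (q - q⁻¹) z t) (ε : Colour) (k : Fin n) :
    h.lift (heckeGen q ε k) = z ε k := by
  have lift_C : h.lift (C F q k) = z .c k :=
    (RingQuot.liftAlgHom_mkAlgHom_apply ..).trans (FreeAlgebra.lift_ι_apply ..)
  have lift_X : h.lift (X F q k) = z .c k * z .y k :=
    (RingQuot.liftAlgHom_mkAlgHom_apply ..).trans (FreeAlgebra.lift_ι_apply ..)
  cases ε
  · exact lift_C
  · change h.lift (C F q k * X F q k) = _
    rw [map_mul, lift_C, lift_X, ← mul_assoc, h.clifford.sq, one_mul]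

end IsHeckeClifford

@[elab_as_elim]
theorem H.induction {p : H F q n → Prop} (gen : ∀ ε k, p (heckeGen q ε k))
    (T : ∀ i, p (T F q i)) (algebraMap : ∀ r : F, p (algebraMap F _ r))
    (add : ∀ a b, p a → p b → p (a + b)) (mul : ∀ a b, p a → p b → p (a * b)) (a : H F q n) :
    p a := by
  obtain ⟨a, rfl⟩ := RingQuot.mkAlgHom_surjective F (Rel F q n) a
  induction a using FreeAlgebra.induction with
  | grade0 r => simpa only [AlgHom.commutes] using algebraMap r
  | grade1 g =>
    cases g with
    | X k => exact (congrArg p (heckeGen_c_mul_y k)).mp (mul _ _ (gen .c k) (gen .y k))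
    | Xinv k => exact (congrArg p (heckeGen_y_mul_c k)).mp (mul _ _ (gen .y k) (gen .c k))
    | C k => exact gen .c k
    | T i => exact T i
  | mul a b ha hb => simpa only [map_mul] using mul _ _ ha hb
  | add a b ha hb => simpa only [map_add] using add _ _ ha hb

end Presentation

section PBW

open PolyClifford

variable {F : Type*} [Field F] {n : ℕ} {R : Type*} [Ring R] [Algebra F R] {ξ : F}
  {z : Colour → Fin n → R} {t : Fin (n - 1) → R}

open Classical in
/-- The standard element `t_w`: the product of the `t i` along a reduced word of `w` (for a family
satisfying the braid relations it does not depend on the descents chosen here). -/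
noncomputable def Tw (t : Fin (n - 1) → R) (w : Perm (Fin n)) : R :=
  if h : ∃ i, IsLeftDescent i w then t h.choose * Tw t (s h.choose * w) else 1
termination_by len w
decreasing_by
  have := len_s_mul_of_isLeftDescent h.choose_spec
  omega

theorem Tw_one : Tw t 1 = 1 := by
  rw [Tw, dif_neg (not_exists.2 not_isLeftDescent_one)]

namespace IsHeckeClifford

theorem t_mul_Tw_eq (h : IsHeckeClifford ξ z t) {i j : Fin (n - 1)} (hij : i.val < j.val)
    {w : Perm (Fin n)} (hwi : IsLeftDescent i w) (hwj : IsLeftDescent j w)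
    (ih : ∀ v, len v < len w → ∀ k, IsLeftDescent k v → Tw t v = t k * Tw t (s k * v)) :
    t i * Tw t (s i * w) = t j * Tw t (s j * w) := by
  have len_i := len_s_mul_of_isLeftDescent hwi
  have len_j := len_s_mul_of_isLeftDescent hwj
  by_cases hadj : j.val = i.val + 1
  · have hji : IsLeftDescent j (s i * w) := by
      rw [isLeftDescent_s_mul_comm_of_adjacent hadj, isLeftDescent_s_mul_iff_of_adjacent hadj]
      exact hwj.trans (lo_eq_hi_of_adjacent hadj ▸ hwi)
    have hij' : IsLeftDescent i (s j * w) := (isLeftDescent_s_mul_comm_of_adjacent hadj w).1 hji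
    have hiji : IsLeftDescent i (s j * (s i * w)) := by
      rwa [← isLeftDescent_s_mul_comm_of_adjacent hadj, s_mul_s_mul]
    have hjij : IsLeftDescent j (s i * (s j * w)) := by
      rwa [isLeftDescent_s_mul_comm_of_adjacent hadj, s_mul_s_mul]
    have len_ji := len_s_mul_of_isLeftDescent hji
    have len_ij := len_s_mul_of_isLeftDescent hij'
    have braid_w : s i * (s j * (s i * w)) = s j * (s i * (s j * w)) := by
      simpa only [mul_assoc] using congrArg (· * w) (s_braid hadj)
    rw [ih _ (by omega) _ hji, ih _ (by omega) _ hiji, ih _ (by omega) _ hij',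
      ih _ (by omega) _ hjij, braid_w]
    simpa only [mul_assoc] using congrArg (· * Tw t (s j * (s i * (s j * w)))) (h.braid hadj)
  · have hfar : i.val + 1 < j.val := by omega
    have descents := isLeftDescent_s_mul_iff_of_far hfar w
    rw [ih _ (by omega) _ (descents.2.2 hwj), ih _ (by omega) _ (descents.1.2 hwi), ← mul_assoc,
      h.far hfar, mul_assoc, ← mul_assoc (s j), ← s_commute_of_far hfar, mul_assoc (s i)]

theorem Tw_of_isLeftDescent (h : IsHeckeClifford ξ z t) {w : Perm (Fin n)} {i : Fin (n - 1)}
    (hw : IsLeftDescent i w) : Tw t w = t i * Tw t (s i * w) := by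
  induction hlen : len w using Nat.strong_induction_on generalizing w i with
  | _ m ih =>
    have hex : ∃ i, IsLeftDescent i w := ⟨i, hw⟩
    have ih' : ∀ v, len v < len w → ∀ k, IsLeftDescent k v → Tw t v = t k * Tw t (s k * v) :=
      fun v hv k hk => ih _ (hlen ▸ hv) hk rfl
    rw [Tw, dif_pos hex]
    rcases lt_trichotomy i.val hex.choose.val with hlt | heq | hgt
    · exact (h.t_mul_Tw_eq hlt hw hex.choose_spec ih').symm
    · rw [← Fin.ext heq]
    · exact h.t_mul_Tw_eq hgt hex.choose_spec hw ih'

theorem Tw_s_mul (h : IsHeckeClifford ξ z t) {w : Perm (Fin n)} {i : Fin (n - 1)}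
    (hw : ¬IsLeftDescent i w) : Tw t (s i * w) = t i * Tw t w := by
  rw [h.Tw_of_isLeftDescent ((isLeftDescent_s_mul_iff i w).2 hw), s_mul_s_mul]

theorem t_mul_Tw (h : IsHeckeClifford ξ z t) (i : Fin (n - 1)) (w : Perm (Fin n)) :
    t i * Tw t w = Tw t (s i * w) + descentCoeff ξ i w • Tw t w := by
  by_cases hw : IsLeftDescent i w
  · rw [descentCoeff, if_pos hw, h.Tw_of_isLeftDescent hw, ← mul_assoc, h.sq, add_mul, one_mul,
      smul_mul_assoc, add_comm]
  · rw [h.Tw_s_mul hw, descentCoeff_of_not hw, zero_smul, add_zero]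

theorem mul_lift (h : IsHeckeClifford ξ z t) (i : Fin (n - 1)) (a : PolyClifford F n) :
    t i * h.clifford.lift (F := F) a =
      h.clifford.lift (F := F) (perm (s i) a) * t i + h.clifford.lift (F := F) (skewDer ξ i a) := by
  induction a using PolyClifford.induction with
  | gen ε k =>
    rw [perm_cliffordGen, skewDer_cliffordGen, map_smul, map_swapDefect]
    simpa only [IsCliffordFamily.lift_cliffordGen] using h.crosses i ε k
  | algebraMap r =>
    have skewDer_algebraMap : skewDer ξ i (algebraMap F (PolyClifford F n) r) = 0 := by
      rw [Algebra.algebraMap_eq_smul_one, map_smul, skewDer_one, smul_zero]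
    rw [skewDer_algebraMap, map_zero, add_zero, AlgHom.commutes, AlgHom.commutes,
      AlgHom.commutes, Algebra.commutes]
  | add a b ha hb =>
    simp only [map_add, mul_add, add_mul, ha, hb]
    abel
  | mul a b ha hb =>
    rw [map_mul, ← mul_assoc, ha, add_mul, mul_assoc, hb, skewDer_mul, map_add, map_mul, map_mul,
      map_mul, map_mul]
    noncomm_ring

/-- The linear map from the model of the regular representation sending `a • δ_w` to `a t_w`. -/
noncomputable def fromPBW (h : IsHeckeClifford ξ z t) : PBWModule F n →ₗ[F] R where
  toFun v := ∑ w, h.clifford.lift (F := F) (v w) * Tw t w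
  map_add' v v' := by simp only [Pi.add_apply, map_add, add_mul, Finset.sum_add_distrib]
  map_smul' c v := by
    simp only [Pi.smul_apply, map_smul, smul_mul_assoc, Finset.smul_sum, RingHom.id_apply]

theorem fromPBW_smul (h : IsHeckeClifford ξ z t) (a : PolyClifford F n) (v : PBWModule F n) :
    h.fromPBW (a • v) = h.clifford.lift (F := F) a * h.fromPBW v := by
  simp only [fromPBW, LinearMap.coe_mk, AddHom.coe_mk, Pi.smul_apply, smul_eq_mul, map_mul,
    Finset.mul_sum, mul_assoc]

theorem fromPBW_delta (h : IsHeckeClifford ξ z t) (w : Perm (Fin n)) :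
    h.fromPBW (delta F w) = Tw t w := by
  refine (Fintype.sum_eq_single w fun v hv => ?_).trans ?_
  · rw [delta_apply, if_neg hv, map_zero, zero_mul]
  · rw [delta_apply, if_pos rfl, map_one, one_mul]

theorem fromPBW_opT (h : IsHeckeClifford ξ z t) (i : Fin (n - 1)) (v : PBWModule F n) :
    h.fromPBW (opT ξ i v) = t i * h.fromPBW v := by
  have on_single (w : Perm (Fin n)) (a : PolyClifford F n) :
      h.fromPBW (opT ξ i (a • delta F w)) = t i * h.fromPBW (a • delta F w) := by
    rw [opT_smul, opT_delta, map_add, fromPBW_smul, fromPBW_smul, fromPBW_smul, map_add, map_smul,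
      fromPBW_delta, fromPBW_delta, ← h.t_mul_Tw, ← mul_assoc, ← mul_assoc, h.mul_lift, add_mul]
  have : h.fromPBW ∘ₗ opT ξ i = LinearMap.mulLeft F (t i) ∘ₗ h.fromPBW :=
    LinearMap.pi_ext fun w a => by
      rw [← smul_delta_eq_single]
      exact on_single w a
  exact LinearMap.congr_fun this v

end IsHeckeClifford

end PBW

section RegularModel

open PolyClifford

variable {F : Type} [Field F] {q : F} {n : ℕ}

/-- The inclusion of the polynomial–Clifford algebra into `H_n`. -/
noncomputable def polyIncl (q : F) (n : ℕ) : PolyClifford F n →ₐ[F] H F q n :=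
  isHeckeClifford_H.clifford.lift

theorem polyIncl_cliffordGen (ε : Colour) (k : Fin n) :
    polyIncl q n (cliffordGen F ε k) = heckeGen q ε k :=
  IsCliffordFamily.lift_cliffordGen _ ε k

/-- The action of `H_n` on the model of its regular representation. -/
noncomputable def rep (q : F) (n : ℕ) : H F q n →ₐ[F] Module.End F (PBWModule F n) :=
  (isHeckeClifford_op (q - q⁻¹)).lift

theorem rep_T (i : Fin (n - 1)) : rep q n (T F q i) = opT (q - q⁻¹) i :=
  (isHeckeClifford_op _).lift_T i

theorem rep_heckeGen (ε : Colour) (k : Fin n) : rep q n (heckeGen q ε k) = opZ F ε k :=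
  (isHeckeClifford_op _).lift_heckeGen ε k

theorem rep_polyIncl (a : PolyClifford F n) :
    rep q n (polyIncl q n a) = Algebra.lsmul F F (PBWModule F n) a := by
  have : (rep q n).comp (polyIncl q n) = Algebra.lsmul F F (PBWModule F n) :=
    algHom_ext fun ε k => by rw [AlgHom.comp_apply, polyIncl_cliffordGen, rep_heckeGen]; rfl
  exact DFunLike.congr_fun this a

theorem fromPBW_rep (h : H F q n) (v : PBWModule F n) :
    isHeckeClifford_H.fromPBW (rep q n h v) = h * isHeckeClifford_H.fromPBW v := by
  induction h using H.induction generalizing v with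
  | gen ε k =>
    rw [← polyIncl_cliffordGen, rep_polyIncl]
    exact isHeckeClifford_H.fromPBW_smul _ v
  | T i => rw [rep_T, isHeckeClifford_H.fromPBW_opT]
  | algebraMap r =>
    rw [AlgHom.commutes, Module.algebraMap_end_apply, map_smul, ← Algebra.smul_def]
  | add a b ha hb => rw [map_add, LinearMap.add_apply, map_add, ha, hb, add_mul]
  | mul a b ha hb => rw [map_mul, Module.End.mul_apply, ha, hb, mul_assoc]

theorem rep_Tw_delta_one (w : Perm (Fin n)) : rep q n (Tw (T F q) w) (delta F 1) = delta F w := by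
  induction w using perm_induction_left with
  | one => rw [Tw_one, map_one, Module.End.one_apply]
  | step i w hw ih =>
    rw [isHeckeClifford_H.Tw_s_mul hw, map_mul, Module.End.mul_apply, ih, rep_T,
      opT_delta_of_not_isLeftDescent _ hw]

theorem rep_fromPBW_delta_one (v : PBWModule F n) :
    rep q n (isHeckeClifford_H.fromPBW v) (delta F 1) = v := by
  have : (LinearMap.applyₗ (delta F 1) ∘ₗ (rep q n).toLinearMap) ∘ₗ isHeckeClifford_H.fromPBW =
      LinearMap.id := by
    refine LinearMap.pi_ext fun w a => ?_
    rw [← smul_delta_eq_single]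
    change rep q n (isHeckeClifford_H.fromPBW (a • delta F w)) (delta F 1) = a • delta F w
    rw [isHeckeClifford_H.fromPBW_smul, isHeckeClifford_H.fromPBW_delta, map_mul,
      Module.End.mul_apply, rep_Tw_delta_one]
    exact LinearMap.congr_fun (rep_polyIncl a) _
  exact LinearMap.congr_fun this v

/-- The PBW theorem for `H_n`: the elements `T_w` form a basis of `H_n` as a left module over the
polynomial–Clifford algebra, and `pbwEquiv` takes the coordinates in this basis. -/
noncomputable def pbwEquiv (q : F) (n : ℕ) : H F q n ≃ₗ[F] PBWModule F n where
  toLinearMap := LinearMap.applyₗ (delta F 1) ∘ₗ (rep q n).toLinearMap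
  invFun := isHeckeClifford_H.fromPBW
  left_inv h := by
    change isHeckeClifford_H.fromPBW (rep q n h (delta F 1)) = h
    rw [fromPBW_rep, isHeckeClifford_H.fromPBW_delta, Tw_one, mul_one]
  right_inv := rep_fromPBW_delta_one

theorem eq_sum_polyIncl_mul_Tw (h : H F q n) :
    h = ∑ w, polyIncl q n (pbwEquiv q n h w) * Tw (T F q) w :=
  ((pbwEquiv q n).symm_apply_apply h).symm

theorem pbwEquiv_mul (a b : H F q n) : pbwEquiv q n (a * b) = rep q n a (pbwEquiv q n b) :=
  LinearMap.congr_fun (map_mul (rep q n) a b) _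

theorem pbwEquiv_polyIncl_mul (a : PolyClifford F n) (h : H F q n) :
    pbwEquiv q n (polyIncl q n a * h) = a • pbwEquiv q n h := by
  rw [pbwEquiv_mul, rep_polyIncl]
  rfl

theorem pbwEquiv_T_mul (i : Fin (n - 1)) (h : H F q n) :
    pbwEquiv q n (T F q i * h) = opT (q - q⁻¹) i (pbwEquiv q n h) := by
  rw [pbwEquiv_mul, rep_T]

theorem pbwEquiv_Tw (w : Perm (Fin n)) : pbwEquiv q n (Tw (T F q) w) = delta F w :=
  rep_Tw_delta_one w

theorem commute_opR_rep (j : Fin (n - 1)) (h : H F q n) :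
    Commute (opR (q - q⁻¹) j) (rep q n h) := by
  induction h using H.induction with
  | gen ε k =>
    rw [rep_heckeGen]
    exact LinearMap.ext (opR_smul _ j (cliffordGen F ε k))
  | T i => rw [rep_T]; exact commute_opR_opT _ _ _
  | algebraMap r => rw [AlgHom.commutes]; exact Algebra.commute_algebraMap_right _ _
  | add a b ha hb => rw [map_add]; exact ha.add_right hb
  | mul a b ha hb => rw [map_mul]; exact ha.mul_right hb

theorem pbwEquiv_mul_T (h : H F q n) (j : Fin (n - 1)) :
    pbwEquiv q n (h * T F q j) = opR (q - q⁻¹) j (pbwEquiv q n h) := by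
  have on_one : pbwEquiv q n (T F q j) = opR (q - q⁻¹) j (delta F 1) := by
    change rep q n (T F q j) (delta F 1) = _
    rw [rep_T, opT_delta_of_not_isLeftDescent _ (not_isLeftDescent_one j),
      opR_delta_of_not_isLeftDescent _ (by rw [inv_one]; exact not_isLeftDescent_one j), mul_one,
      one_mul]
  rw [pbwEquiv_mul, on_one]
  exact (LinearMap.congr_fun (commute_opR_rep j h).eq (delta F 1)).symm

theorem Tw_mul_T {w : Perm (Fin n)} {j : Fin (n - 1)} (hw : ¬IsLeftDescent j w⁻¹) :
    Tw (T F q) w * T F q j = Tw (T F q) (w * s j) := by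
  refine (pbwEquiv q n).injective ?_
  rw [pbwEquiv_mul_T, pbwEquiv_Tw, pbwEquiv_Tw, opR_delta_of_not_isLeftDescent _ hw]

end RegularModel

section Frobenius

open PolyClifford

variable {F : Type} [Field F] {q : F} {n : ℕ}

theorem len_mul_le (u w : Perm (Fin n)) : len (u * w) ≤ len u + len w := by
  induction u using perm_induction_left with
  | one => rw [one_mul]; omega
  | step i u hu ih =>
    rw [mul_assoc, len_s_mul_of_not_isLeftDescent hu]
    have := len_s_mul_le i (u * w)
    omega

theorem rep_Tw_smul_delta (u w x : Perm (Fin n)) (a : PolyClifford F n)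
    (hlen : len u + len w ≤ len x) :
    rep q n (Tw (T F q) u) (a • delta F w) x = if x = u * w then perm u a else 0 := by
  induction u using perm_induction_left generalizing x with
  | one =>
    rw [Tw_one, map_one, Module.End.one_apply, Pi.smul_apply, delta_apply, one_mul, perm_one,
      smul_eq_mul, mul_ite, mul_one, mul_zero]
  | step i u hu ih =>
    rw [len_s_mul_of_not_isLeftDescent hu] at hlen
    have hlen' := len_s_mul_le i (s i * x)
    rw [s_mul_s_mul] at hlen'
    have hx : x ≠ u * w := by
      rintro rfl
      have := len_mul_le u w
      omega
    have hsx : s i * x = u * w ↔ x = s i * u * w := by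
      rw [mul_assoc]
      exact ⟨fun h => by rw [← h, s_mul_s_mul], fun h => by rw [h, s_mul_s_mul]⟩
    rw [isHeckeClifford_H.Tw_s_mul hu, map_mul, Module.End.mul_apply, rep_T, opT_apply,
      ih x (by omega), ih (s i * x) (by omega), if_neg hx, map_zero, smul_zero, add_zero, zero_add,
      perm_mul, if_congr hsx rfl rfl, apply_ite (perm (s i)), map_zero]

open Classical in
/-- Restriction of PBW coordinates to the coset `S_μ d`, reindexed by `S_μ`. -/
noncomputable def trunc (μ : List ℕ) (d : Perm (Fin n)) : PBWModule F n →ₗ[F] PBWModule F n :=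
  LinearMap.pi fun u => if InYoung μ u then LinearMap.proj (u * d) else 0

variable {μ ν : List ℕ} {d : Perm (Fin n)}

theorem trunc_apply_of_inYoung (v : PBWModule F n) {u : Perm (Fin n)} (hu : InYoung μ u) :
    trunc μ d v u = v (u * d) := by
  rw [trunc, LinearMap.pi_apply, if_pos hu, LinearMap.proj_apply]

theorem trunc_apply_of_not_inYoung (v : PBWModule F n) {u : Perm (Fin n)} (hu : ¬InYoung μ u) :
    trunc μ d v u = 0 := by
  rw [trunc, LinearMap.pi_apply, if_neg hu, LinearMap.zero_apply]

theorem trunc_smul (a : PolyClifford F n) (v : PBWModule F n) :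
    trunc μ d (a • v) = a • trunc μ d v := by
  funext u
  rw [Pi.smul_apply]
  by_cases hu : InYoung μ u
  · rw [trunc_apply_of_inYoung _ hu, trunc_apply_of_inYoung _ hu, Pi.smul_apply]
  · rw [trunc_apply_of_not_inYoung _ hu, trunc_apply_of_not_inYoung _ hu, smul_zero]

theorem InYoung.s_mul_iff {i : Fin (n - 1)} (hi : InYoung μ (s i)) {u : Perm (Fin n)} :
    InYoung μ (s i * u) ↔ InYoung μ u :=
  ⟨fun h => s_mul_s_mul i u ▸ hi.mul h, hi.mul⟩

theorem InYoung.mul_s_iff {i : Fin (n - 1)} (hi : InYoung μ (s i)) {u : Perm (Fin n)} :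
    InYoung μ (u * s i) ↔ InYoung μ u :=
  ⟨fun h => mul_s_mul_s i u ▸ h.mul hi, fun h => h.mul hi⟩

theorem IsMinCosetRep.isLeftDescent_mul_iff (hd : IsMinCosetRep μ d) {u : Perm (Fin n)}
    (hu : InYoung μ u) {i : Fin (n - 1)} (hs : InYoung μ (s i)) :
    IsLeftDescent i (u * d) ↔ IsLeftDescent i u := by
  have hb : blk μ (u⁻¹ (lo i)).val = blk μ (u⁻¹ (hi i)).val := by
    rw [hu.inv, hu.inv, (inYoung_s_iff i).mp hs]
  rw [IsLeftDescent, IsLeftDescent, mul_inv_rev, Perm.mul_apply, Perm.mul_apply]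
  refine ⟨fun h => ?_, fun h => hd _ _ h hb.symm⟩
  by_contra hc
  have hlt := (not_lt.mp hc).lt_of_ne (u⁻¹.injective.ne (lo_ne_hi i))
  exact lt_asymm h (hd _ _ hlt hb)

theorem trunc_opT (hd : IsMinCosetRep μ d) (ξ : F) {i : Fin (n - 1)} (hi : InYoung μ (s i))
    (v : PBWModule F n) : trunc μ d (opT ξ i v) = opT ξ i (trunc μ d v) := by
  funext u
  rw [opT_apply]
  by_cases hu : InYoung μ u
  · rw [trunc_apply_of_inYoung _ hu, trunc_apply_of_inYoung _ hu,
      trunc_apply_of_inYoung _ (hi.s_mul_iff.2 hu), opT_apply, mul_assoc,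
      descentCoeff_congr (hd.isLeftDescent_mul_iff hu hi)]
  · rw [trunc_apply_of_not_inYoung _ hu, trunc_apply_of_not_inYoung _ hu,
      trunc_apply_of_not_inYoung _ (fun h => hu (hi.s_mul_iff.1 h)), smul_zero, add_zero,
      map_zero, map_zero, add_zero]

theorem mul_s_eq_s_mul {i j : Fin (n - 1)} (hlo : d (lo j) = lo i) (hhi : d (hi j) = hi i) :
    d * s j = s i * d := by
  rw [s, s, ← hlo, ← hhi, Equiv.swap_apply_apply, inv_mul_cancel_right]

theorem trunc_opR (ξ : F) {i j : Fin (n - 1)} (hs : InYoung μ (s i))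
    (hlo : d (lo j) = lo i) (hhi : d (hi j) = hi i) (v : PBWModule F n) :
    trunc μ d (opR ξ j v) = opR ξ i (trunc μ d v) := by
  funext u
  rw [opR_apply]
  by_cases hu : InYoung μ u
  · have hdesc : IsLeftDescent j (u * d)⁻¹ ↔ IsLeftDescent i u⁻¹ := by
      rw [IsLeftDescent, IsLeftDescent, inv_inv, inv_inv, Perm.mul_apply, Perm.mul_apply, hlo, hhi]
    rw [trunc_apply_of_inYoung _ hu, trunc_apply_of_inYoung _ hu,
      trunc_apply_of_inYoung _ (hs.mul_s_iff.2 hu), opR_apply, mul_assoc, mul_s_eq_s_mul hlo hhi,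
      ← mul_assoc, descentCoeff_congr hdesc]
  · rw [trunc_apply_of_not_inYoung _ hu, trunc_apply_of_not_inYoung _ hu,
      trunc_apply_of_not_inYoung _ (fun h => hu (hs.mul_s_iff.1 h)), smul_zero, add_zero]

/-- The Frobenius projection `H_n → H_μ`: the part of `h` supported on the basis elements `T_{ud}`
with `u ∈ S_μ`, each of them replaced by `T_u`. -/
noncomputable def frob (q : F) (μ : List ℕ) (d : Perm (Fin n)) : H F q n →ₗ[F] H F q n :=
  (pbwEquiv q n).symm.toLinearMap ∘ₗ trunc μ d ∘ₗ (pbwEquiv q n).toLinearMap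

theorem pbwEquiv_frob (h : H F q n) :
    pbwEquiv q n (frob q μ d h) = trunc μ d (pbwEquiv q n h) :=
  (pbwEquiv q n).apply_symm_apply _

theorem X_mem_parabolicC (μ : List ℕ) (i : Fin n) : X F q i ∈ parabolicC F q (n := n) μ :=
  Algebra.subset_adjoin (Or.inl (Or.inl (Or.inl ⟨i, rfl⟩)))

theorem Xinv_mem_parabolicC (μ : List ℕ) (i : Fin n) : Xinv F q i ∈ parabolicC F q (n := n) μ :=
  Algebra.subset_adjoin (Or.inl (Or.inl (Or.inr ⟨i, rfl⟩)))

theorem C_mem_parabolicC (μ : List ℕ) (i : Fin n) : C F q i ∈ parabolicC F q (n := n) μ :=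
  Algebra.subset_adjoin (Or.inl (Or.inr ⟨i, rfl⟩))

theorem T_mem_parabolicC {i : Fin (n - 1)} (hi : InYoung μ (s i)) :
    T F q i ∈ parabolicC F q (n := n) μ :=
  Algebra.subset_adjoin (Or.inr ⟨i, hi, rfl⟩)

theorem polyIncl_mem_parabolicC (μ : List ℕ) (a : PolyClifford F n) :
    polyIncl q n a ∈ parabolicC F q (n := n) μ := by
  induction a using PolyClifford.induction with
  | gen ε k =>
    rw [polyIncl_cliffordGen]
    cases ε with
    | c => exact C_mem_parabolicC μ k
    | y => exact mul_mem (C_mem_parabolicC μ k) (X_mem_parabolicC μ k)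
  | algebraMap r => rw [AlgHom.commutes]; exact Subalgebra.algebraMap_mem _ r
  | add a b ha hb => rw [map_add]; exact add_mem ha hb
  | mul a b ha hb => rw [map_mul]; exact mul_mem ha hb

theorem Tw_mem_parabolicC {u : Perm (Fin n)} (hu : InYoung μ u) :
    Tw (T F q) u ∈ parabolicC F q (n := n) μ := by
  induction hk : len u using Nat.strong_induction_on generalizing u with
  | _ k ih =>
    by_cases hu1 : u = 1
    · rw [hu1, Tw_one]
      exact one_mem _
    · obtain ⟨i, hi⟩ := exists_isLeftDescent hu1
      have hs := hu.s_of_isLeftDescent hi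
      have hlen := len_s_mul_of_isLeftDescent hi
      rw [isHeckeClifford_H.Tw_of_isLeftDescent hi]
      exact mul_mem (T_mem_parabolicC hs) (ih _ (by omega) (hs.s_mul_iff.2 hu) rfl)

theorem frob_mem (h : H F q n) : frob q μ d h ∈ parabolicC F q (n := n) μ := by
  rw [eq_sum_polyIncl_mul_Tw (frob q μ d h), pbwEquiv_frob]
  refine sum_mem fun u _ => ?_
  by_cases hu : InYoung μ u
  · exact mul_mem (polyIncl_mem_parabolicC μ _) (Tw_mem_parabolicC hu)
  · rw [trunc_apply_of_not_inYoung _ hu, map_zero, zero_mul]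
    exact zero_mem _

theorem frob_polyIncl_mul (a : PolyClifford F n) (h : H F q n) :
    frob q μ d (polyIncl q n a * h) = polyIncl q n a * frob q μ d h := by
  refine (pbwEquiv q n).injective ?_
  rw [pbwEquiv_frob, pbwEquiv_polyIncl_mul, pbwEquiv_polyIncl_mul, trunc_smul, pbwEquiv_frob]

theorem frob_T_mul (hd : IsMinCosetRep μ d) {i : Fin (n - 1)} (hi : InYoung μ (s i))
    (h : H F q n) : frob q μ d (T F q i * h) = T F q i * frob q μ d h := by
  refine (pbwEquiv q n).injective ?_
  rw [pbwEquiv_frob, pbwEquiv_T_mul, pbwEquiv_T_mul, trunc_opT hd _ hi, pbwEquiv_frob]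

@[elab_as_elim]
theorem parabolicC_induction {p : H F q n → Prop}
    (polyIncl : ∀ a, p (polyIncl q n a)) (T : ∀ i, InYoung μ (s i) → p (T F q i))
    (add : ∀ a b, p a → p b → p (a + b)) (mul : ∀ a b, p a → p b → p (a * b)) {b : H F q n}
    (hb : b ∈ parabolicC F q (n := n) μ) : p b := by
  have gen (ε : Colour) (k : Fin n) : p (heckeGen q ε k) :=
    polyIncl_cliffordGen (q := q) ε k ▸ polyIncl _
  refine Algebra.adjoin_induction (p := fun b _ => p b) ?_ (fun r => ?_)
    (fun a b _ _ => add a b) (fun a b _ _ => mul a b) hb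
  · rintro _ (((⟨k, rfl⟩ | ⟨k, rfl⟩) | ⟨k, rfl⟩) | ⟨i, hi, rfl⟩)
    · exact (heckeGen_c_mul_y k).subst (mul _ _ (gen .c k) (gen .y k))
    · exact (heckeGen_y_mul_c k).subst (mul _ _ (gen .y k) (gen .c k))
    · exact gen .c k
    · exact T i hi
  · exact (HC.polyIncl q n).commutes r ▸ polyIncl _

theorem frob_mul (hd : IsMinCosetRep μ d) {b : H F q n}
    (hb : b ∈ parabolicC F q (n := n) μ) (h : H F q n) :
    frob q μ d (b * h) = b * frob q μ d h := by
  refine parabolicC_induction (p := fun b => ∀ h, frob q μ d (b * h) = b * frob q μ d h)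
    frob_polyIncl_mul (fun i hi => frob_T_mul hd hi) (fun a b ha hb h => ?_)
    (fun a b ha hb h => ?_) hb h
  · rw [add_mul, map_add, ha, hb, add_mul]
  · rw [mul_assoc, ha, hb, mul_assoc]

theorem frob_mul_T {i j : Fin (n - 1)} (hs : InYoung μ (s i)) (hlo : d (lo j) = lo i)
    (hhi : d (hi j) = hi i) (h : H F q n) :
    frob q μ d (h * T F q j) = frob q μ d h * T F q i := by
  refine (pbwEquiv q n).injective ?_
  rw [pbwEquiv_frob, pbwEquiv_mul_T, pbwEquiv_mul_T, trunc_opR _ hs hlo hhi, pbwEquiv_frob]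

/-- By length, `T_x a T_y` has no coordinate at `ud` with `u ∈ S_μ`, except possibly at `xy`. -/
theorem frob_Tw_mul (hd : IsBlockReversal μ ν d) {x y : Perm (Fin n)} (a : PolyClifford F n)
    (hlen : len x + len y ≤ len d) (hxy : ∀ u, InYoung μ u → u * d = x * y → u = 1) :
    frob q μ d (Tw (T F q) x * (polyIncl q n a * Tw (T F q) y)) =
      if d = x * y then polyIncl q n (perm x a) else 0 := by
  suffices frob q μ d (Tw (T F q) x * (polyIncl q n a * Tw (T F q) y)) =
      polyIncl q n (if d = x * y then perm x a else 0) * Tw (T F q) 1 by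
    rw [this, Tw_one, mul_one, apply_ite (polyIncl q n), map_zero]
  refine (pbwEquiv q n).injective (funext fun u => ?_)
  rw [pbwEquiv_frob, pbwEquiv_polyIncl_mul, pbwEquiv_mul, pbwEquiv_polyIncl_mul, pbwEquiv_Tw,
    pbwEquiv_Tw, Pi.smul_apply, delta_apply]
  by_cases hu : InYoung μ u
  · rw [trunc_apply_of_inYoung _ hu,
      rep_Tw_smul_delta _ _ _ _ (hlen.trans (hd.len_le_len_mul hu))]
    by_cases hu1 : u = 1
    · rw [hu1, one_mul, if_pos rfl, smul_eq_mul, mul_one]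
    · rw [if_neg fun h => hu1 (hxy u hu h), if_neg hu1, smul_zero]
  · have hu1 : u ≠ 1 := fun h => hu (h ▸ InYoung.one)
    rw [trunc_apply_of_not_inYoung _ hu, if_neg hu1, smul_zero]

theorem frob_Tw_mul_polyIncl (hd : IsBlockReversal μ ν d) (w : Perm (Fin n))
    (a : PolyClifford F n) :
    frob q μ d (Tw (T F q) w * polyIncl q n a) =
      frob q μ d (Tw (T F q) w) * polyIncl q n (perm d a) := by
  induction w using perm_induction_young (μ := μ) with
  | base w hw =>
    have formula (a : PolyClifford F n) : frob q μ d (Tw (T F q) w * polyIncl q n a) =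
        if d = w then polyIncl q n (perm w a) else 0 := by
      have := frob_Tw_mul (q := q) (x := w) (y := 1) hd a
        (by rw [len_one]; exact hd.len_le hw)
        fun u hu h => hd.isMinCosetRep.eq_one hu (by rw [h, mul_one]; exact hw)
      rwa [Tw_one, mul_one, mul_one] at this
    have at_one := formula 1
    rw [map_one, mul_one, map_one, map_one] at at_one
    rw [formula, at_one]
    split_ifs with h
    · rw [one_mul, h]
    · rw [zero_mul]
  | step i hi w hw ih =>
    rw [isHeckeClifford_H.Tw_s_mul hw, mul_assoc, frob_T_mul hd.isMinCosetRep hi, ih,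
      frob_T_mul hd.isMinCosetRep hi, mul_assoc]

theorem frob_mul_polyIncl (hd : IsBlockReversal μ ν d) (h : H F q n) (a : PolyClifford F n) :
    frob q μ d (h * polyIncl q n a) = frob q μ d h * polyIncl q n (perm d a) := by
  rw [eq_sum_polyIncl_mul_Tw h, Finset.sum_mul, map_sum, map_sum, Finset.sum_mul]
  refine Finset.sum_congr rfl fun w _ => ?_
  rw [mul_assoc, frob_polyIncl_mul, frob_polyIncl_mul, frob_Tw_mul_polyIncl hd, mul_assoc]

theorem frob_Tw_mul_Tw (hd : IsBlockReversal μ ν d) {x y : Perm (Fin n)}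
    (hx : IsMinCosetRep μ x) (hy : IsMinCosetRep μ y) (hlen : len x ≤ len y) :
    frob q μ d (Tw (T F q) x * Tw (T F q) (y⁻¹ * d)) = if x = y then 1 else 0 := by
  have hlen' := hd.len_add_len hy
  have huniq (u : Perm (Fin n)) (hu : InYoung μ u) (h : u * d = x * (y⁻¹ * d)) : u = 1 := by
    refine hy.eq_one hu ?_
    rw [← mul_assoc] at h
    rwa [mul_right_cancel h, inv_mul_cancel_right]
  have hxy : d = x * (y⁻¹ * d) ↔ x = y := by
    rw [← mul_assoc, right_eq_mul, mul_inv_eq_one]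
  have := frob_Tw_mul (q := q) hd 1 (x := x) (y := y⁻¹ * d) (by omega) huniq
  rwa [map_one, one_mul, map_one, map_one, if_congr hxy rfl rfl] at this

end Frobenius

section Coinduction

open PolyClifford

theorem bijective_of_unitriangular {R M I : Type*} [Ring R] [AddCommGroup M] [Module R M]
    [Finite I] (deg : I → ℕ) (c : Module.End R (I → M))
    (hc : ∀ m x, (∀ y, deg y < deg x → m y = 0) → c m x = m x) : Function.Bijective c := by
  have vanish (k : ℕ) : ∀ m x, deg x < k → ((c - 1) ^ k) m x = 0 := by
    induction k with
    | zero => exact fun _ _ h => absurd h (Nat.not_lt_zero _)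
    | succ k ih =>
      intro m x hx
      rw [pow_succ', Module.End.mul_apply, LinearMap.sub_apply, Module.End.one_apply, Pi.sub_apply,
        hc _ x fun y hy => ih m y (by omega), sub_self]
  have := Fintype.ofFinite I
  have nilpotent : IsNilpotent (c - 1) :=
    ⟨Finset.univ.sup deg + 1, LinearMap.ext fun m => funext fun x =>
      vanish _ m x (Nat.lt_succ_of_le (Finset.le_sup (Finset.mem_univ x)))⟩
  have unit := nilpotent.isUnit_one_add
  rw [add_sub_cancel] at unit
  exact (Module.End.isUnit_iff c).mp unit

variable {F : Type} [Field F] {q : F} {n : ℕ}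

theorem T_mul_mem_span_Tw_mul_polyIncl (i : Fin (n - 1)) {z : H F q n}
    (hz : z ∈ Submodule.span F (Set.range fun p : Perm (Fin n) × PolyClifford F n =>
      Tw (T F q) p.1 * polyIncl q n p.2)) :
    T F q i * z ∈ Submodule.span F (Set.range fun p : Perm (Fin n) × PolyClifford F n =>
      Tw (T F q) p.1 * polyIncl q n p.2) := by
  induction hz using Submodule.span_induction with
  | mem z hz =>
    obtain ⟨⟨w, a⟩, rfl⟩ := hz
    rw [← mul_assoc, isHeckeClifford_H.t_mul_Tw, add_mul, smul_mul_assoc]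
    exact add_mem (Submodule.subset_span ⟨(s i * w, a), rfl⟩)
      (Submodule.smul_mem _ _ (Submodule.subset_span ⟨(w, a), rfl⟩))
  | zero => rw [mul_zero]; exact zero_mem _
  | add a b _ _ ha hb => rw [mul_add]; exact add_mem ha hb
  | smul r a _ ha => rw [mul_smul_comm]; exact Submodule.smul_mem _ _ ha

theorem mem_span_Tw_mul_polyIncl (h : H F q n) :
    h ∈ Submodule.span F (Set.range fun p : Perm (Fin n) × PolyClifford F n =>
      Tw (T F q) p.1 * polyIncl q n p.2) := by
  rw [eq_sum_polyIncl_mul_Tw h]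
  refine sum_mem fun w hw => ?_
  clear hw
  generalize pbwEquiv q n h w = a
  induction w using perm_induction_left generalizing a with
  | one => exact Submodule.subset_span ⟨(1, a), by simp only [Tw_one, one_mul, mul_one]⟩
  | step i w hw ih =>
    have move := isHeckeClifford_H (q := q).mul_lift i (perm (s i) a)
    rw [← perm_mul, s_mul_self, perm_one] at move
    change T F q i * polyIncl q n _ = polyIncl q n _ * T F q i + polyIncl q n _ at move
    rw [isHeckeClifford_H.Tw_s_mul hw, ← mul_assoc, eq_sub_of_add_eq move.symm, sub_mul, mul_assoc]
    exact sub_mem (T_mul_mem_span_Tw_mul_polyIncl i (ih _)) (ih _)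

variable {μ ν : List ℕ} {d : Perm (Fin n)} {M : Type} [AddCommGroup M] [Module F M]

/-- The action of `H_n` on a coinduced module by right translation. -/
noncomputable def coindAct (B : Subalgebra F (H F q n)) (ρ : ↥B →ₐ[F] Module.End F M) :
    H F q n →ₐ[F] Module.End F ↥(coindPar F q B ρ) where
  toFun h := ((LinearMap.mulRight F h).lcomp F M).restrict fun ψ hψ b x => by
    simp only [LinearMap.lcomp_apply, LinearMap.mulRight_apply, mul_assoc]
    exact hψ b (x * h)
  map_one' := by
    ext ψ x
    exact congrArg ψ.val (mul_one x)
  map_mul' a b := by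
    ext ψ x
    exact congrArg ψ.val (mul_assoc x a b).symm
  map_zero' := by
    ext ψ x
    exact (congrArg ψ.val (mul_zero x)).trans (map_zero ψ.val)
  map_add' a b := by
    ext ψ x
    exact (congrArg ψ.val (mul_add x a b)).trans (map_add ψ.val _ _)
  commutes' r := by
    ext ψ x
    refine (congrArg ψ.val ?_).trans (map_smul ψ.val r x)
    rw [LinearMap.mulRight_apply, ← Algebra.commutes, ← Algebra.smul_def]

theorem coindAct_apply (B : Subalgebra F (H F q n)) (ρ : ↥B →ₐ[F] Module.End F M)
    (h : H F q n) (ψ : ↥(coindPar F q B ρ)) (x : H F q n) :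
    (coindAct B ρ h ψ).val x = ψ.val (x * h) := rfl

/-- The action of `frob q μ d h` on an `H_μ`-module. -/
noncomputable def frobAct (d : Perm (Fin n))
    (ρ' : ↥(parabolicC F q (n := n) μ) →ₐ[F] Module.End F M) : H F q n →ₗ[F] Module.End F M :=
  ρ'.toLinearMap ∘ₗ
    (frob q μ d).codRestrict (Subalgebra.toSubmodule (parabolicC F q (n := n) μ)) frob_mem

variable {ρν : ↥(parabolicC F q (n := n) ν) →ₐ[F] Module.End F M}
  {ρ' : ↥(parabolicC F q (n := n) μ) →ₐ[F] Module.End F M}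

theorem frobAct_apply (h : H F q n) : frobAct d ρ' h = ρ' ⟨frob q μ d h, frob_mem h⟩ := rfl

theorem frobAct_mul (hd : IsMinCosetRep μ d) (b : ↥(parabolicC F q (n := n) μ))
    (h : H F q n) : frobAct d ρ' (b.val * h) = ρ' b * frobAct d ρ' h := by
  rw [frobAct_apply, frobAct_apply, ← map_mul]
  exact congrArg ρ' (Subtype.ext (frob_mul hd b.2 h))

theorem frobAct_mul_of_frob_mul_eq {h c b : H F q n} (hb : b ∈ parabolicC F q (n := n) μ)
    (hfrob : frob q μ d (h * c) = frob q μ d h * b) :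
    frobAct d ρ' (h * c) = frobAct d ρ' h * ρ' ⟨b, hb⟩ := by
  rw [frobAct_apply, frobAct_apply, ← map_mul]
  exact congrArg ρ' (Subtype.ext hfrob)

theorem frob_mul_heckeGen (hd : IsBlockReversal μ ν d) (h : H F q n) (ε : Colour) (k : Fin n) :
    frob q μ d (h * heckeGen q ε k) = frob q μ d h * heckeGen q ε (d k) := by
  rw [← polyIncl_cliffordGen, frob_mul_polyIncl hd, perm_cliffordGen, polyIncl_cliffordGen]

theorem frob_mul_X (hd : IsBlockReversal μ ν d) (h : H F q n) (k : Fin n) :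
    frob q μ d (h * X F q k) = frob q μ d h * X F q (d k) := by
  rw [← heckeGen_c_mul_y, ← heckeGen_c_mul_y, ← mul_assoc, frob_mul_heckeGen hd,
    frob_mul_heckeGen hd, mul_assoc]

theorem frob_mul_Xinv (hd : IsBlockReversal μ ν d) (h : H F q n) (k : Fin n) :
    frob q μ d (h * Xinv F q k) = frob q μ d h * Xinv F q (d k) := by
  rw [← heckeGen_y_mul_c, ← heckeGen_y_mul_c, ← mul_assoc, frob_mul_heckeGen hd,
    frob_mul_heckeGen hd, mul_assoc]

theorem frobAct_mul_right (hd : IsBlockReversal μ ν d)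
    (hρ' : IsTwistedRep F q ν d (parabolicC F q (n := n) μ) ρν ρ')
    (c : ↥(parabolicC F q (n := n) ν)) (h : H F q n) :
    frobAct d ρ' (h * c.val) = frobAct d ρ' h * ρν c := by
  obtain ⟨hX, hXinv, hC, hT⟩ := hρ'
  have cancel (k : Fin n) : d⁻¹ (d k) = k := inv_apply_apply d k
  obtain ⟨c, hc⟩ := c
  change frobAct d ρ' (h * c) = _
  induction hc using Algebra.adjoin_induction generalizing h with
  | mem c hc =>
    rcases hc with ((⟨k, rfl⟩ | ⟨k, rfl⟩) | ⟨k, rfl⟩) | ⟨j, hj, rfl⟩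
    · exact (frobAct_mul_of_frob_mul_eq (X_mem_parabolicC μ _) (frob_mul_X hd h k)).trans
        (congrArg _ (hX (d k) _ _ rfl (by rw [cancel])))
    · exact (frobAct_mul_of_frob_mul_eq (Xinv_mem_parabolicC μ _) (frob_mul_Xinv hd h k)).trans
        (congrArg _ (hXinv (d k) _ _ rfl (by rw [cancel])))
    · exact (frobAct_mul_of_frob_mul_eq (C_mem_parabolicC μ _) (frob_mul_heckeGen hd h .c k)).trans
        (congrArg _ (hC (d k) _ _ rfl (by rw [cancel])))
    · obtain ⟨i, hi, hlo, hhi⟩ := hd.exists_apply_lo_eq hj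
      rw [frobAct_mul_of_frob_mul_eq (T_mem_parabolicC hi) (frob_mul_T hi hlo hhi h)]
      exact congrArg _ (hT i j _ _ (by rw [← hlo, cancel]) rfl rfl)
  | algebraMap r =>
    change frobAct d ρ' (h * algebraMap F _ r) = frobAct d ρ' h * ρν (algebraMap F _ r)
    rw [AlgHom.commutes, ← Algebra.commutes, ← Algebra.commutes, ← Algebra.smul_def,
      ← Algebra.smul_def, map_smul]
  | add a b ha hb iha ihb =>
    rw [mul_add, map_add, iha, ihb, ← mul_add, ← map_add]
    rfl
  | mul a b ha hb iha ihb =>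
    rw [← mul_assoc, ihb, iha, mul_assoc, ← map_mul]
    rfl

end Coinduction

section Comparison

theorem IsInducedAlong.eq_top {F A B M E : Type} [Field F] [Ring A] [Ring B] [Algebra F A]
    [Algebra F B] [AddCommGroup M] [Module F M] [AddCommGroup E] [Module F E] {φ : B →ₐ[F] A}
    {ρ : B →ₐ[F] Module.End F M} {ρE : A →ₐ[F] Module.End F E} {ι : M →ₗ[F] E}
    (hInd : IsInducedAlong F φ ρ ρE ι) (N : Submodule F E)
    (hN : ∀ a, ∀ e ∈ N, ρE a e ∈ N) (hι : ∀ m, ι m ∈ N) : N = ⊤ := by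
  let ρQ : A →ₐ[F] Module.End F (E ⧸ N) :=
    { toFun := fun a => N.mapQ N (ρE a) (hN a)
      map_one' := by ext e; simp
      map_mul' := fun a b => by ext e; simp
      map_zero' := by ext e; simp
      map_add' := fun a b => by ext e; simp
      commutes' := fun r => by ext e; simp [Module.algebraMap_end_apply] }
  have mkQ_eq_zero : N.mkQ = 0 :=
    (hInd.2 (E ⧸ N) ρQ 0 fun b _ => (map_zero (ρQ (φ b))).symm).unique
      ⟨fun _ _ => rfl, fun m => (Submodule.Quotient.mk_eq_zero N).2 (hι m)⟩
      ⟨fun x _ => (map_zero (ρQ x)).symm, fun _ => rfl⟩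
  rw [← N.ker_mkQ, mkQ_eq_zero, LinearMap.ker_zero]

variable {F : Type} [Field F] {q : F} {n : ℕ} {μ ν : List ℕ} {d : Perm (Fin n)}
  {M : Type} [AddCommGroup M] [Module F M]
  {ρν : ↥(parabolicC F q (n := n) ν) →ₐ[F] Module.End F M}
  {ρ' : ↥(parabolicC F q (n := n) μ) →ₐ[F] Module.End F M}
  {E : Type} [AddCommGroup E] [Module F E] {ρE : H F q n →ₐ[F] Module.End F E} {ι : M →ₗ[F] E}

open Classical in
/-- The map `(m_x)_x ↦ ∑ T_{x⁻¹ d} ⊗ m_x` to the induced module, with `x` running over the minimal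
length representatives of `S_μ \ S_n`. -/
noncomputable def indSum (μ : List ℕ) (d : Perm (Fin n)) (ρE : H F q n →ₐ[F] Module.End F E)
    (ι : M →ₗ[F] E) : ({x : Perm (Fin n) // IsMinCosetRep μ x} → M) →ₗ[F] E :=
  ∑ x, ρE (Tw (T F q) (x.val⁻¹ * d)) ∘ₗ ι ∘ₗ LinearMap.proj x

open Classical in
theorem indSum_apply (m : {x : Perm (Fin n) // IsMinCosetRep μ x} → M) :
    indSum μ d ρE ι m = ∑ x, ρE (Tw (T F q) (x.val⁻¹ * d)) (ι (m x)) :=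
  LinearMap.sum_apply _ _ _

open Classical in
theorem indSum_single (x : {x : Perm (Fin n) // IsMinCosetRep μ x}) (m : M) :
    indSum μ d ρE ι (Pi.single x m) = ρE (Tw (T F q) (x.val⁻¹ * d)) (ι m) := by
  rw [indSum_apply, Finset.sum_eq_single x]
  · rw [Pi.single_eq_same]
  · intro y _ hy
    rw [Pi.single_eq_of_ne hy, map_zero, map_zero]
  · exact fun h => absurd (Finset.mem_univ _) h

theorem IsInducedAlong.apply_mul_mem {A : Type} [Ring A] [Algebra F A] {B : Subalgebra F A}
    {ρ : ↥B →ₐ[F] Module.End F M} {ρE : A →ₐ[F] Module.End F E}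
    (hInd : IsInducedAlong F B.val ρ ρE ι) (z : A) {c : A} (hc : c ∈ B) (m : M) :
    ρE (z * c) (ι m) = ρE z (ι (ρ ⟨c, hc⟩ m)) := by
  rw [hInd.1, map_mul]
  rfl

theorem Tw_inv_mem_range_indSum (hd : IsBlockReversal μ ν d)
    (hInd : IsInducedAlong F (B := ↥(parabolicC F q (n := n) ν))
      (parabolicC F q (n := n) ν).val ρν ρE ι)
    (v : Perm (Fin n)) (m : M) :
    ρE (Tw (T F q) v⁻¹) (ι m) ∈ LinearMap.range (indSum μ d ρE ι) := by
  induction v using perm_induction_young (μ := ν) generalizing m with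
  | base v hv =>
    classical
    have hx : IsMinCosetRep μ (d * v) := by
      rw [← inv_inv v] at hv ⊢
      exact hd.isMinCosetRep_mul_inv hv
    refine ⟨Pi.single ⟨d * v, hx⟩ m, ?_⟩
    rw [indSum_single, mul_inv_rev, inv_mul_cancel_right]
  | step i hi v hv ih =>
    rw [mul_inv_rev, s_inv, ← Tw_mul_T (by rwa [inv_inv]),
      hInd.apply_mul_mem _ (T_mem_parabolicC hi)]
    exact ih _

theorem mem_range_indSum (hd : IsBlockReversal μ ν d)
    (hInd : IsInducedAlong F (B := ↥(parabolicC F q (n := n) ν))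
      (parabolicC F q (n := n) ν).val ρν ρE ι)
    (h : H F q n) (m : M) :
    ρE h (ι m) ∈ LinearMap.range (indSum μ d ρE ι) := by
  induction mem_span_Tw_mul_polyIncl h using Submodule.span_induction with
  | mem z hz =>
    obtain ⟨⟨w, a⟩, rfl⟩ := hz
    rw [hInd.apply_mul_mem _ (polyIncl_mem_parabolicC ν a), ← inv_inv w]
    exact Tw_inv_mem_range_indSum hd hInd _ _
  | zero => rw [map_zero]; exact zero_mem _
  | add a b _ _ ha hb => rw [map_add]; exact add_mem ha hb
  | smul r a _ ha => rw [map_smul]; exact Submodule.smul_mem _ _ ha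

theorem indSum_surjective (hd : IsBlockReversal μ ν d)
    (hInd : IsInducedAlong F (B := ↥(parabolicC F q (n := n) ν))
      (parabolicC F q (n := n) ν).val ρν ρE ι) :
    Function.Surjective (indSum μ d ρE ι) := by
  rw [← LinearMap.range_eq_top]
  refine hInd.eq_top _ ?_ fun m => ?_
  · rintro h _ ⟨m, rfl⟩
    rw [indSum_apply, map_sum]
    refine sum_mem fun x _ => ?_
    rw [← Module.End.mul_apply, ← map_mul]
    exact mem_range_indSum hd hInd _ _
  · have := mem_range_indSum hd hInd 1 m
    rwa [map_one, Module.End.one_apply] at this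

/-- Evaluation of an element of the coinduced module at the `T_x`, with `x` running over the minimal
length representatives of `S_μ \ S_n`. -/
noncomputable def coindEval (ρ' : ↥(parabolicC F q (n := n) μ) →ₐ[F] Module.End F M) :
    ↥(coindPar F q (parabolicC F q (n := n) μ) ρ') →ₗ[F]
      ({x : Perm (Fin n) // IsMinCosetRep μ x} → M) where
  toFun ψ x := ψ.val (Tw (T F q) x.val)
  map_add' _ _ := rfl
  map_smul' _ _ := rfl

theorem coindEval_injective : Function.Injective (coindEval ρ') := by
  rw [injective_iff_map_eq_zero]
  intro ψ hψ
  have vanish_Tw (w : Perm (Fin n)) : ψ.val (Tw (T F q) w) = 0 := by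
    induction w using perm_induction_young (μ := μ) with
    | base w hw => exact congrFun hψ ⟨w, hw⟩
    | step i hi w hw ih =>
      rw [isHeckeClifford_H.Tw_s_mul hw]
      exact (ψ.2 ⟨_, T_mem_parabolicC hi⟩ _).trans (by rw [ih, map_zero])
  refine Subtype.ext (LinearMap.ext fun h => ?_)
  rw [eq_sum_polyIncl_mul_Tw h, map_sum]
  exact Finset.sum_eq_zero fun w _ =>
    (ψ.2 ⟨_, polyIncl_mem_parabolicC μ _⟩ _).trans (by rw [vanish_Tw, map_zero])

/-- The `H_ν`-equivariant map `m ↦ (h ↦ frob q μ d h • m)` from `M` to the module coinduced from its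
twist; it corresponds to the comparison map under the universal property of induction. -/
noncomputable def toCoind (hd : IsMinCosetRep μ d)
    (ρ' : ↥(parabolicC F q (n := n) μ) →ₐ[F] Module.End F M) :
    M →ₗ[F] ↥(coindPar F q (parabolicC F q (n := n) μ) ρ') :=
  (frobAct d ρ').flip.codRestrict _ fun m b x => by
    rw [LinearMap.flip_apply, LinearMap.flip_apply, frobAct_mul hd, Module.End.mul_apply]

theorem toCoind_apply (hd : IsMinCosetRep μ d) (m : M) (y : H F q n) :
    (toCoind hd ρ' m).val y = frobAct d ρ' y m := rfl

theorem toCoind_equivariant (hd : IsBlockReversal μ ν d)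
    (hρ' : IsTwistedRep F q ν d (parabolicC F q (n := n) μ) ρν ρ')
    (c : ↥(parabolicC F q (n := n) ν)) (m : M) :
    toCoind hd.isMinCosetRep ρ' (ρν c m) =
      coindAct _ ρ' c.val (toCoind hd.isMinCosetRep ρ' m) := by
  refine Subtype.ext (LinearMap.ext fun y => ?_)
  rw [coindAct_apply, toCoind_apply, toCoind_apply, frobAct_mul_right hd hρ', Module.End.mul_apply]

theorem frobAct_Tw_mul_Tw (hd : IsBlockReversal μ ν d) {x y : Perm (Fin n)}
    (hx : IsMinCosetRep μ x) (hy : IsMinCosetRep μ y) (hlen : len x ≤ len y) :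
    frobAct d ρ' (Tw (T F q) x * Tw (T F q) (y⁻¹ * d)) = if x = y then 1 else 0 := by
  have formula := frob_Tw_mul_Tw (q := q) hd hx hy hlen
  rw [frobAct_apply]
  split_ifs at formula ⊢ with h
  · exact (congrArg ρ' (Subtype.ext formula)).trans (map_one ρ')
  · exact (congrArg ρ' (Subtype.ext formula)).trans (map_zero ρ')

open Classical in
theorem coindEval_comp_indSum_apply {hd : IsMinCosetRep μ d}
    {Ψ : E →ₗ[F] ↥(coindPar F q (parabolicC F q (n := n) μ) ρ')}
    (hΨ : ∀ h e, Ψ (ρE h e) = coindAct _ ρ' h (Ψ e)) (hι : ∀ m, Ψ (ι m) = toCoind hd ρ' m)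
    (m : {x : Perm (Fin n) // IsMinCosetRep μ x} → M)
    (x : {x : Perm (Fin n) // IsMinCosetRep μ x}) :
    coindEval ρ' (Ψ (indSum μ d ρE ι m)) x =
      ∑ y, frobAct d ρ' (Tw (T F q) x.val * Tw (T F q) (y.val⁻¹ * d)) (m y) := by
  rw [indSum_apply, map_sum, map_sum, Finset.sum_apply]
  refine Finset.sum_congr rfl fun y _ => ?_
  rw [hΨ, hι]
  rfl

theorem bijective_coindEval_comp_indSum (hd : IsBlockReversal μ ν d)
    {Ψ : E →ₗ[F] ↥(coindPar F q (parabolicC F q (n := n) μ) ρ')}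
    (hΨ : ∀ h e, Ψ (ρE h e) = coindAct _ ρ' h (Ψ e))
    (hι : ∀ m, Ψ (ι m) = toCoind hd.isMinCosetRep ρ' m) :
    Function.Bijective (coindEval ρ' ∘ₗ Ψ ∘ₗ indSum μ d ρE ι) := by
  classical
  refine bijective_of_unitriangular (fun x => len x.val) _ fun m x hm => ?_
  rw [LinearMap.comp_apply, LinearMap.comp_apply, coindEval_comp_indSum_apply hΨ hι,
    Finset.sum_eq_single x]
  · rw [frobAct_Tw_mul_Tw hd x.2 x.2 le_rfl, if_pos rfl, Module.End.one_apply]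
  · intro y _ hy
    by_cases hlen : len y.val < len x.val
    · rw [hm y hlen, map_zero]
    · rw [frobAct_Tw_mul_Tw hd x.2 y.2 (not_lt.mp hlen), if_neg fun h => hy (Subtype.ext h.symm),
        LinearMap.zero_apply]
  · exact fun h => absurd (Finset.mem_univ _) h

theorem bijective_of_extends_toCoind (hd : IsBlockReversal μ ν d)
    (hInd : IsInducedAlong F (B := ↥(parabolicC F q (n := n) ν))
      (parabolicC F q (n := n) ν).val ρν ρE ι)
    {Ψ : E →ₗ[F] ↥(coindPar F q (parabolicC F q (n := n) μ) ρ')}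
    (hΨ : ∀ h e, Ψ (ρE h e) = coindAct _ ρ' h (Ψ e))
    (hι : ∀ m, Ψ (ι m) = toCoind hd.isMinCosetRep ρ' m) :
    Function.Bijective Ψ := by
  have hbij := bijective_coindEval_comp_indSum hd hΨ hι
  refine ⟨?_, ?_⟩
  · have : Function.Injective (Ψ ∘ indSum μ d ρE ι) := .of_comp (f := coindEval ρ') hbij.1
    exact this.of_comp_right (indSum_surjective hd hInd)
  · intro ψ
    obtain ⟨m, hm⟩ := hbij.2 (coindEval ρ' ψ)
    exact ⟨_, coindEval_injective hm⟩

end Comparison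

theorem coinduced_iso_induced_general
    (F : Type) [Field F] (q : F) (_hq : q ≠ 0) (n : ℕ) (μ : List ℕ) (hμ : μ.sum = n)
    (d : Perm (Fin n)) (hdmin : IsMinDC μ μ.reverse d)
    (hdlong : ∀ x : Perm (Fin n), IsMinDC μ μ.reverse x → len x ≤ len d)
    (M : Type) [AddCommGroup M] [Module F M]
    (ρν : ↥(parabolicC F q (n := n) μ.reverse) →ₐ[F] Module.End F M)
    (ρ' : ↥(parabolicC F q (n := n) μ) →ₐ[F] Module.End F M)
    (hρ' : IsTwistedRep F q μ.reverse d (parabolicC F q (n := n) μ) ρν ρ')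
    (E : Type) [AddCommGroup E] [Module F E]
    (ρE : H F q n →ₐ[F] Module.End F E) (ι : M →ₗ[F] E)
    (hInd : IsInducedAlong F (A := H F q n) (B := ↥(parabolicC F q (n := n) μ.reverse))
      (parabolicC F q (n := n) μ.reverse).val ρν ρE ι) :
    ∃ Φ : ↥(coindPar F q (parabolicC F q (n := n) μ) ρ') ≃ₗ[F] E,
      ∀ (h : H F q n) (ψ ψ' : ↥(coindPar F q (parabolicC F q (n := n) μ) ρ')),
        (∀ y : H F q n, ψ'.val y = ψ.val (y * h)) → Φ ψ' = ρE h (Φ ψ) := by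
  have hd := isBlockReversal_of_longest hμ hdmin hdlong
  obtain ⟨Ψ, ⟨hΨ, hι⟩, -⟩ :=
    hInd.2 _ (coindAct _ ρ') (toCoind hd.isMinCosetRep ρ') (toCoind_equivariant hd hρ')
  let e := LinearEquiv.ofBijective Ψ (bijective_of_extends_toCoind hd hInd hΨ hι)
  have he (h : H F q n) (x : E) : e (ρE h x) = coindAct _ ρ' h (e x) := hΨ h x
  refine ⟨e.symm, fun h ψ ψ' hψ => ?_⟩
  rw [LinearEquiv.symm_apply_eq, he, LinearEquiv.apply_symm_apply]
  exact Subtype.ext (LinearMap.ext hψ)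

/-- **Induction is coinduction from the opposite parabolic** (Corollary `c1` of
Brundan–Kleshchev): let `μ` be a composition of `n`, `ν = μ*` the reversed
composition, and `d` the longest minimal double coset representative in `D_{μ,ν}`.
Then for every `H_ν`-module `M` there is an isomorphism of `H_n`-modules
`Hom_{H_μ}(H_n, ᵈM) ≅ H_n ⊗_{H_ν} M`, where `ᵈM` is `M` viewed as an `H_μ`-module
via the isomorphism `φ_{d⁻¹} : H_μ → H_ν`. -/
theorem coinduced_iso_induced
    (F : Type) [Field F] [IsAlgClosed F] (h2 : (2 : F) ≠ 0)
    (q : F) (hq : GoodParam F q) (n : ℕ)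
    (μ : List ℕ) (hμ : IsComposition μ n)
    (dd : Equiv.Perm (Fin n)) (hdmin : IsMinDC μ μ.reverse dd)
    (hdlong : ∀ x : Equiv.Perm (Fin n), IsMinDC μ μ.reverse x → len x ≤ len dd)
    (M : Type) [AddCommGroup M] [Module F M]
    (ρν : ↥(parabolicC F q (n := n) μ.reverse) →ₐ[F] Module.End F M)
    (ρ' : ↥(parabolicC F q (n := n) μ) →ₐ[F] Module.End F M)
    (hρ' : IsTwistedRep F q μ.reverse dd (parabolicC F q (n := n) μ) ρν ρ')
    (E : Type) [AddCommGroup E] [Module F E]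
    (ρE : H F q n →ₐ[F] Module.End F E) (ι : M →ₗ[F] E)
    (hInd : IsInducedAlong F (A := H F q n) (B := ↥(parabolicC F q (n := n) μ.reverse))
      (parabolicC F q (n := n) μ.reverse).val ρν ρE ι) :
    ∃ Φ : ↥(coindPar F q (parabolicC F q (n := n) μ) ρ') ≃ₗ[F] E,
      ∀ (h : H F q n) (ψ ψ' : ↥(coindPar F q (parabolicC F q (n := n) μ) ρ')),
        (∀ y : H F q n, ψ'.val y = ψ.val (y * h)) → Φ ψ' = ρE h (Φ ψ) :=
  coinduced_iso_induced_general F q hq.1 n μ hμ.2 dd hdmin hdlong M ρν ρ' hρ' E ρE ι hInd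

end HC
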